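/- arXiv:1405.6408 — 3 statements merged into one kernel-verified Lean document; each statement's English description precedes it below -/
import Mathlib

section
/- Let (n_t) and (m_t) be sequences of positive integers with n_t ≤ m_t, n_t → ∞, and n_t/m_t → c̄ ∈ (0,1) as t → ∞. Write μ(p) = μ0(p, n_t, m_t) and κ4 = μ(4) − 4μ(3)μ(1) − 3μ(2)² + 12μ(2)μ(1)² − 6μ(1)⁴. Then n_t⁶·κ4 → −e⁴·(1−c̄)^{4(1−c̄)/c̄ − 2}·( c̄³(16 + c̄(6c̄−23)) − 12(1−c̄)c̄²(3c̄−4)·ln(1−c̄) + 48c̄(1−c̄)²·(ln(1−c̄))² + 16(1−c̄)²·(ln(1−c̄))³ ) as t → ∞. -/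
open Finset Filter Topology

/-- Exact `p`-th moment of the GLRT statistic under `H₀`. -/
noncomputable def mu0 (p n m : ℕ) : ℝ :=
  Real.Gamma ((m : ℝ) * n) / ((n : ℝ) ^ p * Real.Gamma ((m : ℝ) * n - p)) *
    ∏ j ∈ Finset.range n,
      Real.Gamma ((m : ℝ) - n + 1 - p / n + j) / Real.Gamma ((m : ℝ) - n + 1 + j)


/-- Backward difference with step `h`. -/
noncomputable def nab (h : ℝ) (f : ℝ → ℝ) : ℝ → ℝ := fun y => f y - f (y - h)

theorem mvt_aux (F f : ℝ → ℝ) (a b : ℝ) (hab : a < b)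
    (hF : ∀ x, a ≤ x → HasDerivAt F (f x) x) :
    ∃ ξ, a ≤ ξ ∧ ξ ≤ b ∧ F b - F a = (b - a) * f ξ := by
  obtain ⟨ξ, hξ, h⟩ := exists_hasDerivAt_eq_slope F f hab
    (fun x hx => (hF x hx.1).continuousAt.continuousWithinAt) (fun x hx => hF x hx.1.le)
  refine ⟨ξ, hξ.1.le, hξ.2.le, ?_⟩
  have : b - a ≠ 0 := by linarith
  rw [h]; field_simp

theorem nab_mvt (h : ℝ) (hh : 0 < h) (k : ℕ) : ∀ (F : ℕ → ℝ → ℝ) (a y : ℝ),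
    (∀ i x, a < x → HasDerivAt (F i) (F (i+1) x) x) → a < y - k * h →
    ∃ ξ, y - k * h ≤ ξ ∧ ξ ≤ y ∧ (nab h)^[k] (F 0) y = h ^ k * F k ξ := by
  induction k with
  | zero => intro F a y _ _; exact ⟨y, by simp, le_rfl, by simp⟩
  | succ k ih =>
    intro F a y hF hy
    push_cast at hy
    obtain ⟨ξ, h1, h2, h3⟩ := ih (fun i => nab h (F i)) (a + h) y (by
      intro i x hx
      have e1 := hF i x (by linarith)
      have e2 := (hF i (x - h) (by linarith)).comp_sub_const x h
      exact e1.sub e2) (by linarith)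
    obtain ⟨η, g1, g2, g3⟩ := mvt_aux (F k) (F (k+1)) (ξ - h) ξ (by linarith)
      (fun x hx => hF k x (by linarith))
    refine ⟨η, by push_cast; linarith, by linarith, ?_⟩
    rw [Function.iterate_succ_apply, h3]
    simp only [nab]
    rw [g3]; ring

theorem sum_bounds (F f : ℝ → ℝ) (hF : ∀ x, 0 < x → HasDerivAt F (f x) x)
    (hf : ∀ x y, 0 < x → x ≤ y → f y ≤ f x) (a : ℝ) (ha : 0 < a) (n : ℕ) :
    ∑ j ∈ range n, f (a + 1 + j) ≤ F (a + n) - F a ∧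
    F (a + n) - F a ≤ ∑ j ∈ range n, f (a + j) := by
  induction n with
  | zero => simp
  | succ n ih =>
    obtain ⟨ξ, h1, h2, h3⟩ := mvt_aux F f (a + n) (a + n + 1) (by linarith)
      (fun x hx => hF x (by have : (0:ℝ) ≤ n := n.cast_nonneg
                            linarith))
    have hn : (0:ℝ) ≤ n := n.cast_nonneg
    have e1 := hf (a+n) ξ (by linarith) h1
    have e2 := hf ξ (a + n + 1) (by linarith) h2
    rw [sum_range_succ, sum_range_succ]
    push_cast
    have : a + 1 + n = a + n + 1 := by ring
    rw [this, ← add_assoc]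
    constructor <;> nlinarith [ih.1, ih.2]

/-- Successive derivatives of the logarithm. -/
noncomputable def dlog : ℕ → ℝ → ℝ
  | 0 => Real.log
  | (i+1) => fun y => (-1) ^ i * (Nat.factorial i) / y ^ (i+1)

theorem dlog_deriv (i : ℕ) (x : ℝ) (hx : 0 < x) : HasDerivAt (dlog i) (dlog (i+1) x) x := by
  cases i with
  | zero => simpa [dlog] using Real.hasDerivAt_log hx.ne'
  | succ i =>
    have := (hasDerivAt_const x ((-1:ℝ) ^ i * (Nat.factorial i))).fun_div
      (hasDerivAt_pow (i+1) x) (by positivity)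
    simp only [dlog]
    refine this.congr_deriv ?_
    rw [Nat.factorial_succ]
    push_cast
    field_simp
    ring

theorem nab_log (h : ℝ) (hh : 0 < h) (k : ℕ) (y : ℝ) (hy : 0 < y - (k+1 : ℕ) * h) :
    h ^ (k+1) * Nat.factorial k / y ^ (k+1) ≤ (-1) ^ k * (nab h)^[k+1] Real.log y ∧
    (-1) ^ k * (nab h)^[k+1] Real.log y ≤
      h ^ (k+1) * Nat.factorial k / (y - (k+1 : ℕ) * h) ^ (k+1) := by
  obtain ⟨ξ, h1, h2, h3⟩ := nab_mvt h hh (k+1) dlog 0 y dlog_deriv hy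
  change (nab h)^[k+1] Real.log y = _ at h3
  have h0 : 0 < ξ := by linarith
  have : (-1) ^ k * (nab h)^[k+1] Real.log y = h ^ (k+1) * Nat.factorial k / ξ ^ (k+1) := by
    rw [h3]; simp only [dlog]
    have : ((-1:ℝ) ^ k) * (-1) ^ k = 1 := by rw [← mul_pow]; simp
    linear_combination (h ^ (k+1) * Nat.factorial k / ξ ^ (k+1)) * this
  rw [this]
  constructor <;> gcongr

theorem nab_iter_linear (h : ℝ) (k : ℕ) (a b : ℝ) (y : ℝ):
   (nab h)^[k+2] (fun y => a * y + b) y = 0 := by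
  have : (nab h)^[2] (fun y => a * y + b) = fun _ => 0 := by
    funext y; simp [nab]; ring
  rw [Function.iterate_add_apply, this]
  have h0 : nab h (fun _ => 0) = fun _ => 0 := by funext y; simp [nab]
  rw [Function.iterate_fixed h0]

theorem nab_iter_sub (h : ℝ) (k : ℕ) : ∀ (f g : ℝ → ℝ),
   (nab h)^[k] (fun y => f y - g y) = fun y => (nab h)^[k] f y - (nab h)^[k] g y := by
  induction k with
  | zero => intro f g; rfl
  | succ k ih =>
    intro f g
    simp only [Function.iterate_succ_apply]
    rw [← ih]; congr 1; funext y; simp [nab]; ring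

theorem nab_iter_sum (h : ℝ) (k : ℕ) : ∀ (f : ℕ → ℝ → ℝ) (N : ℕ),
   (nab h)^[k] (fun y => ∑ i ∈ range N, f i y) = fun y => ∑ i ∈ range N, (nab h)^[k] (f i) y := by
  induction k with
  | zero => intro f g; rfl
  | succ k ih =>
    intro f N
    simp only [Function.iterate_succ_apply]
    rw [← ih]; congr 1; funext y; simp [nab, sum_sub_distrib]

theorem nab_iter_shift (h : ℝ) (k : ℕ) (c : ℝ) : ∀ (f : ℝ → ℝ),
   (nab h)^[k] (fun y => f (y + c)) = fun y => (nab h)^[k] f (y + c) := by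
  induction k with
  | zero => intro f; rfl
  | succ k ih =>
    intro f
    simp only [Function.iterate_succ_apply]
    rw [← ih]; congr 1; funext y; simp only [nab]; ring_nf

theorem nab_iter_tendsto (h : ℝ) (hh : 0 < h) (k : ℕ) : ∀ (f : ℕ → ℝ → ℝ) (g : ℝ → ℝ) (a : ℝ),
   (∀ y, a < y → Tendsto (fun N => f N y) atTop (𝓝 (g y))) → ∀ y, a + k * h < y →
   Tendsto (fun N => (nab h)^[k] (f N) y) atTop (𝓝 ((nab h)^[k] g y)) := by
  induction k with
  | zero => intro f g a H y hy; exact H y (by simpa using hy)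
  | succ k ih =>
    intro f g a H y hy
    push_cast at hy
    simp only [Function.iterate_succ_apply]
    apply ih (fun N => nab h (f N)) (nab h g) (a + h) _ y (by linarith)
    intro y hy
    exact (H y (by linarith)).sub (H (y - h) (by linarith))

/-- log Gamma -/
noncomputable def lgam (x : ℝ) : ℝ := Real.log (Real.Gamma x)

theorem nab_lgam_tendsto (h : ℝ) (hh : 0 < h) (k : ℕ) (x : ℝ) (hx : 0 < x - (k+2 : ℕ) * h) :
    Tendsto (fun N : ℕ => ∑ i ∈ range (N+1), (-1) ^ (k+1) * (nab h)^[k+2] Real.log (x + i))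
      atTop (𝓝 ((-1) ^ (k+2) * (nab h)^[k+2] lgam x)) := by
  have := nab_iter_tendsto h hh (k+2) (fun N y => Real.BohrMollerup.logGammaSeq y N) lgam 0
    (fun y hy => Real.BohrMollerup.tendsto_log_gamma hy) x (by linarith)
  have := this.const_mul ((-1:ℝ) ^ (k+2))
  refine this.congr ?_
  intro N
  have e : (fun y => Real.BohrMollerup.logGammaSeq y N) = fun y =>
    (Real.log N * y + Real.log (Nat.factorial N)) - ∑ i ∈ range (N+1), Real.log (y + i) := by
    funext y; simp only [Real.BohrMollerup.logGammaSeq]; ring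
  rw [e, nab_iter_sub, nab_iter_sum]
  simp only [nab_iter_linear, nab_iter_shift, ← mul_sum]
  ring

theorem pow_antideriv (q : ℕ) (x : ℝ) (hx : 0 < x) :
   HasDerivAt (fun y : ℝ => - (1 / ((q+1 : ℕ) * y ^ (q+1)))) (1 / x ^ (q+2)) x := by
  have := ((hasDerivAt_const x (1:ℝ)).fun_div
      ((hasDerivAt_pow (q+1) x).const_mul ((q+1 : ℕ) : ℝ)) (by positivity)).neg
  refine this.congr_deriv ?_
  push_cast
  field_simp
  ring

theorem pow_anti (q : ℕ) (x y : ℝ) (hx : 0 < x) (hxy : x ≤ y) : 1 / y ^ q ≤ 1 / x ^ q := by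
  gcongr

theorem pow_tail (q : ℕ) (x : ℝ) : 
   Tendsto (fun N : ℕ => - (1 / ((q+1 : ℕ) * (x + (N+1 : ℕ)) ^ (q+1))) - - (1 / ((q+1 : ℕ) * x ^ (q+1))))
     atTop (𝓝 (1 / ((q+1 : ℕ) * x ^ (q+1)))) := by
  have h1 : Tendsto (fun N : ℕ => x + ((N+1 : ℕ) : ℝ)) atTop atTop :=
    tendsto_atTop_add_const_left _ _ ((tendsto_natCast_atTop_atTop).comp (tendsto_add_atTop_nat 1))
  have h2 := ((tendsto_pow_atTop (n := q+1) (by omega)).comp h1).const_mul_atTop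
    (show (0:ℝ) < (q+1 : ℕ) by positivity)
  have h3 := (h2.inv_tendsto_atTop.neg).sub_const (- (1 / ((q+1 : ℕ) * x ^ (q+1))))
  simp only [neg_zero, zero_sub, neg_neg] at h3
  refine h3.congr ?_
  intro N; simp

theorem nab_lgam (h : ℝ) (hh : 0 < h) (k : ℕ) (x : ℝ) (hx : 0 < x - (k+2 : ℕ) * h - 1) :
    h ^ (k+2) * Nat.factorial k / x ^ (k+1) ≤ (-1) ^ (k+2) * (nab h)^[k+2] lgam x ∧
    (-1) ^ (k+2) * (nab h)^[k+2] lgam x ≤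
      h ^ (k+2) * Nat.factorial k / (x - (k+2 : ℕ) * h - 1) ^ (k+1) := by
  have T := nab_lgam_tendsto h hh k x (by linarith)
  have hkh : 0 ≤ ((k+2 : ℕ) : ℝ) * h := by positivity
  have hfac : ((Nat.factorial (k+1) : ℕ) : ℝ) = (k+1 : ℕ) * Nat.factorial k := by
    rw [Nat.factorial_succ]; push_cast; ring
  constructor
  · have t2 := (pow_tail k x).const_mul (h ^ (k+2) * Nat.factorial (k+1))
    refine le_trans (le_of_eq ?_) (le_of_tendsto_of_tendsto' t2 T ?_)
    · rw [hfac]; field_simp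
    · intro N
      have := (sum_bounds _ _ (pow_antideriv k) (pow_anti (k+2)) x (by linarith) (N+1)).2
      refine (mul_le_mul_of_nonneg_left this (by positivity)).trans ?_
      rw [mul_sum]
      apply sum_le_sum
      intro i _
      have hi : (0:ℝ) ≤ i := i.cast_nonneg
      have := (nab_log h hh (k+1) (x + i) (by push_cast at hx ⊢; linarith)).1
      refine le_trans (le_of_eq ?_) this
      ring
  · have t2 := (pow_tail k (x - (k+2 : ℕ) * h - 1)).const_mul (h ^ (k+2) * Nat.factorial (k+1))
    refine le_trans (le_of_tendsto_of_tendsto' T t2 ?_) (le_of_eq ?_) 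
    · intro N
      have := (sum_bounds _ _ (pow_antideriv k) (pow_anti (k+2)) (x - (k+2 : ℕ) * h - 1) hx (N+1)).1
      refine le_trans ?_ (mul_le_mul_of_nonneg_left this (by positivity))
      rw [mul_sum]
      apply sum_le_sum
      intro i _
      have hi : (0:ℝ) ≤ i := i.cast_nonneg
      have := (nab_log h hh (k+1) (x + i) (by push_cast at hx ⊢; linarith)).2
      refine le_trans this (le_of_eq ?_)
      have : x + i - (k + 1 + 1 : ℕ) * h = x - (k+2:ℕ) * h - 1 + 1 + i := by push_cast; ring
      rw [this]; ring
    · rw [hfac]; field_simp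

theorem lgam_one (h x : ℝ) (hh : 0 < h) (hx : 0 < x - h - 1) :
    h * Real.log (x - h - 1) ≤ lgam x - lgam (x - h) ∧ lgam x - lgam (x - h) ≤ h * Real.log x := by
  have C := Real.convexOn_log_Gamma
  have step : ∀ y : ℝ, 0 < y → lgam (y+1) - lgam y = Real.log y := by
    intro y hy
    simp only [lgam]
    rw [Real.Gamma_add_one hy.ne', Real.log_mul hy.ne' (Real.Gamma_pos_of_pos hy).ne']; ring
  have c1 := C.slope_mono_adjacent (x := x - h) (y := x) (z := x + 1)
    (show 0 < x - h by linarith) (show (0:ℝ) < x + 1 by linarith) (by linarith) (by linarith)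
  have c2 := C.slope_mono_adjacent (x := x - h - 1) (y := x - h) (z := x)
    (show 0 < x - h - 1 by linarith) (show (0:ℝ) < x by linarith) (by linarith) (by linarith)
  simp only [Function.comp] at c1 c2
  have s1 := step x (by linarith)
  have s2 := step (x - h - 1) hx
  rw [show x - h - 1 + 1 = x - h by ring] at s2
  simp only [lgam] at s1 s2 ⊢
  rw [s1] at c1
  rw [s2] at c2
  rw [show x - (x - h) = h by ring] at c1 c2
  rw [div_le_iff₀ hh] at c1
  rw [le_div_iff₀ hh] at c2
  ring_nf at c1 c2 ⊢
  exact ⟨c2, c1⟩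

/-- Sum of the differences of log Gamma. -/
noncomputable def Sg (k n m : ℕ) : ℝ :=
  ∑ j ∈ range n, (-1) ^ k * (nab (1 / n))^[k] lgam ((m : ℝ) - n + 1 + j)

theorem Sg_bounds (k n m : ℕ) (hk : k + 2 ≤ n) (hm : (2:ℝ) < m - n) :
    Nat.factorial k * ∑ j ∈ range n, 1 / ((m : ℝ) - n + 1 + j) ^ (k+1) ≤
      (n:ℝ) ^ (k+2) * Sg (k+2) n m ∧
    (n:ℝ) ^ (k+2) * Sg (k+2) n m ≤
      Nat.factorial k * ∑ j ∈ range n, 1 / ((m : ℝ) - n - 2 + 1 + j) ^ (k+1) := by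
  have hn : (0:ℝ) < n := by
    have : 0 < n := by omega
    exact_mod_cast this
  have hkn : ((k+2 : ℕ) : ℝ) * (1 / n) ≤ 1 := by
    have : ((k+2 : ℕ) : ℝ) ≤ n := by exact_mod_cast hk
    rw [mul_one_div, div_le_one hn]; exact this
  have key : ∀ w : ℝ, (n:ℝ) ^ (k+2) * ((1 / n) ^ (k+2) * Nat.factorial k / w) =
      Nat.factorial k * (1 / w) := by
    intro w
    have : (n:ℝ) ^ (k+2) * (1 / n) ^ (k+2) = 1 := by
      rw [← mul_pow]; field_simp; simp
    linear_combination (Nat.factorial k / w) * this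
  unfold Sg
  rw [mul_sum, mul_sum, mul_sum]
  constructor
  · apply sum_le_sum
    intro j _
    have hj : (0:ℝ) ≤ j := j.cast_nonneg
    rw [← key]
    exact mul_le_mul_of_nonneg_left
      (nab_lgam (1/n) (by positivity) k _ (by linarith)).1 (by positivity)
  · apply sum_le_sum
    intro j _
    have hj : (0:ℝ) ≤ j := j.cast_nonneg
    rw [← key]
    refine mul_le_mul_of_nonneg_left
      ((nab_lgam (1/n) (by positivity) k _ (by linarith)).2.trans ?_) (by positivity)
    apply div_le_div_of_nonneg_left (by positivity)
    · apply pow_pos; linarith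
    · apply pow_le_pow_left₀ <;> linarith

theorem Sg_bounds0 (n m : ℕ) (hk : 2 ≤ n) (hm : (2:ℝ) < m - n) :
    Real.log (m + 1) - Real.log (m - n + 1) ≤ (n:ℝ) ^ 2 * Sg 2 n m ∧
    (n:ℝ) ^ 2 * Sg 2 n m ≤ Real.log (m - 2) - Real.log (m - n - 2) := by
  have h := Sg_bounds 0 n m hk hm
  have hF : ∀ x : ℝ, 0 < x → HasDerivAt Real.log (1 / x ^ (0+1)) x := by
    intro x hx; simpa using Real.hasDerivAt_log hx.ne'
  have b1 := (sum_bounds _ _ hF (pow_anti _) (m - n + 1) (by linarith) n).2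
  have b2 := (sum_bounds _ _ hF (pow_anti _) (m - n - 2) (by linarith) n).1
  rw [show (m:ℝ) - n + 1 + n = m + 1 by ring] at b1
  rw [show (m:ℝ) - n - 2 + n = m - 2 by ring] at b2
  simp only [Nat.factorial_zero, Nat.cast_one, one_mul] at h
  exact ⟨b1.trans h.1, h.2.trans b2⟩

theorem Sg_bounds1 (q n m : ℕ) (hk : q + 3 ≤ n) (hm : (2:ℝ) < m - n) :
    Nat.factorial q * (1 / ((m:ℝ) - n + 1) ^ (q+1) - 1 / ((m:ℝ) + 1) ^ (q+1))
      ≤ (n:ℝ) ^ (q+3) * Sg (q+3) n m ∧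
    (n:ℝ) ^ (q+3) * Sg (q+3) n m ≤
      Nat.factorial q * (1 / ((m:ℝ) - n - 2) ^ (q+1) - 1 / ((m:ℝ) - 2) ^ (q+1)) := by
  have h := Sg_bounds (q+1) n m hk hm
  have hn : (0:ℝ) ≤ n := n.cast_nonneg
  have b1 := (sum_bounds _ _ (pow_antideriv q) (pow_anti _) (m - n + 1) (by linarith) n).2
  have b2 := (sum_bounds _ _ (pow_antideriv q) (pow_anti _) (m - n - 2) (by linarith) n).1
  rw [show (m:ℝ) - n + 1 + n = m + 1 by ring] at b1
  rw [show (m:ℝ) - n - 2 + n = m - 2 by ring] at b2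
  have hfac : ((Nat.factorial (q+1) : ℕ) : ℝ) = (q+1 : ℕ) * Nat.factorial q := by
    rw [Nat.factorial_succ]; push_cast; ring
  have e : ∀ u v : ℝ, Nat.factorial q * (1 / u - 1 / v) =
      (Nat.factorial (q+1) : ℕ) * (- (1 / ((q+1:ℕ) * v)) - - (1 / ((q+1:ℕ) * u))) := by
    intro u v
    rw [hfac]
    simp only [one_div, mul_inv]
    have : ((q+1:ℕ):ℝ) * ((q+1:ℕ):ℝ)⁻¹ = 1 := mul_inv_cancel₀ (by positivity)
    linear_combination (-(Nat.factorial q * (u⁻¹ - v⁻¹))) * this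
  rw [e, e]
  exact ⟨(mul_le_mul_of_nonneg_left b1 (by positivity)).trans h.1,
    h.2.trans (mul_le_mul_of_nonneg_left b2 (by positivity))⟩

/-- antiderivative of log -/
noncomputable def Lam (x : ℝ) : ℝ := x * Real.log x - x

theorem Lam_deriv (x : ℝ) (hx : 0 < x) : HasDerivAt (fun y => - Lam y) (- Real.log x) x := by
  have := ((Real.hasDerivAt_mul_log hx.ne').fun_sub (hasDerivAt_id' x)).fun_neg
  refine this.congr_deriv ?_
  ring

theorem Sg_bounds_one (n m : ℕ) (hk : 1 ≤ n) (hm : (2:ℝ) < m - n) :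
    - (1 / n * (Lam (m + 1) - Lam (m - n + 1))) ≤ Sg 1 n m ∧
    Sg 1 n m ≤ - (1 / n * (Lam (m - 2) - Lam (m - n - 2))) := by
  have hn1 : (1:ℝ) ≤ n := by exact_mod_cast hk
  have hn : (0:ℝ) < n := by linarith
  have hh : (1:ℝ) / n ≤ 1 := by rw [div_le_one hn]; exact hn1
  have hanti : ∀ x y : ℝ, 0 < x → x ≤ y → - Real.log y ≤ - Real.log x := by
    intro x y hx hxy; have := Real.log_le_log hx hxy; linarith
  have b1 := (sum_bounds _ _ Lam_deriv hanti (m - n + 1) (by linarith) n).2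
  have b2 := (sum_bounds _ _ Lam_deriv hanti (m - n - 2) (by linarith) n).1
  rw [show (m:ℝ) - n + 1 + n = m + 1 by ring] at b1
  rw [show (m:ℝ) - n - 2 + n = m - 2 by ring] at b2
  have hp : (0:ℝ) < 1 / n := by positivity
  unfold Sg
  constructor
  · calc _ = 1 / (n:ℝ) * (-Lam (m + 1) - -Lam (m - n + 1)) := by ring
      _ ≤ _ := mul_le_mul_of_nonneg_left b1 hp.le
      _ ≤ _ := by
        rw [mul_sum]
        apply sum_le_sum
        intro j _
        have hj : (0:ℝ) ≤ j := j.cast_nonneg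
        have := (lgam_one (1/n) ((m:ℝ) - n + 1 + j) hp (by linarith)).2
        simp only [Function.iterate_one, nab]
        linarith
  · calc _ ≤ 1 / (n:ℝ) * ∑ j ∈ range n, - Real.log ((m:ℝ) - n - 2 + 1 + j) := by
            rw [mul_sum]
            apply sum_le_sum
            intro j _
            have hj : (0:ℝ) ≤ j := j.cast_nonneg
            have := (lgam_one (1/n) ((m:ℝ) - n + 1 + j) hp (by linarith)).1
            have e := Real.log_le_log (x := (m:ℝ) - n - 2 + 1 + j)
              (y := (m:ℝ) - n + 1 + j - 1 / n - 1) (by linarith) (by linarith)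
            have e2 := mul_le_mul_of_nonneg_left e hp.le
            simp only [Function.iterate_one, nab]
            linarith
      _ ≤ _ := mul_le_mul_of_nonneg_left b2 hp.le
      _ = _ := by ring

theorem Gamma_ratio (M : ℝ) (p : ℕ) (hp : (p:ℝ) < M) :
    Real.Gamma M = Real.Gamma (M - p) * Real.exp (∑ i ∈ range p, Real.log (M - 1 - i)) := by
  induction p with
  | zero => simp
  | succ p ih =>
    push_cast at hp ⊢
    have hpos : 0 < M - 1 - p := by linarith
    rw [ih (by linarith), sum_range_succ, Real.exp_add, Real.exp_log hpos,
      show M - p = (M - 1 - p) + 1 by ring, Real.Gamma_add_one hpos.ne',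
      show M - (p + 1) = M - 1 - p by ring]
    ring

/-- log of the elementary factor -/
noncomputable def Tl (n m p : ℕ) : ℝ :=
  (∑ i ∈ range p, Real.log ((m:ℝ) * n - 1 - i)) - p * Real.log n

/-- log of the Gamma factor -/
noncomputable def Pl (n m p : ℕ) : ℝ :=
  ∑ j ∈ range n, lgam ((m : ℝ) - n + 1 + j - p * (1 / n))

theorem mu0_eq (p n m : ℕ) (hn : 0 < n) (hp : (p:ℝ) < (m:ℝ) * n) (hpn : p ≤ n)
    (hm : (2:ℝ) < m - n) :
    mu0 p n m = Real.exp (Tl n m p + Pl n m p - Pl n m 0) := by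
  have hn' : (0:ℝ) < n := by exact_mod_cast hn
  have hh : (p:ℝ) / n ≤ 1 := by rw [div_le_one hn']; exact_mod_cast hpn
  unfold mu0
  have e1 : ∏ j ∈ Finset.range n,
      Real.Gamma ((m : ℝ) - n + 1 - p / n + j) / Real.Gamma ((m : ℝ) - n + 1 + j)
      = Real.exp (Pl n m p - Pl n m 0) := by
    unfold Pl
    rw [← sum_sub_distrib, Real.exp_sum]
    apply prod_congr rfl
    intro j _
    have hj : (0:ℝ) ≤ j := j.cast_nonneg
    unfold lgam
    have g1 := Real.Gamma_pos_of_pos (s := (m : ℝ) - n + 1 + j - p * (1 / n))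
      (by rw [mul_one_div]; linarith)
    have g2 := Real.Gamma_pos_of_pos (s := (m : ℝ) - n + 1 + j - (0:ℕ) * (1 / n))
      (by simp; linarith)
    rw [Real.exp_sub, Real.exp_log g1, Real.exp_log g2]
    congr 2
    · ring
    · simp
  rw [e1, Gamma_ratio _ p hp, add_sub_assoc, Real.exp_add]
  congr 1
  unfold Tl
  rw [Real.exp_sub, mul_comm (p:ℝ), Real.exp_mul, Real.exp_log hn', Real.rpow_natCast]
  have := (Real.Gamma_pos_of_pos (s := (m:ℝ) * n - p) (by linarith)).ne'
  field_simp

theorem Sg1_eq (n m : ℕ) : Sg 1 n m = Pl n m 1 - Pl n m 0 := by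
  unfold Sg Pl
  rw [← sum_sub_distrib]
  apply sum_congr rfl
  intro j _
  simp [nab]
theorem Sg2_eq (n m : ℕ) : Sg 2 n m = Pl n m 2 - 2 * Pl n m 1 + Pl n m 0 := by
  unfold Sg Pl
  rw [mul_sum, ← sum_sub_distrib, ← sum_add_distrib]
  apply sum_congr rfl
  intro j _
  simp [nab]; ring_nf
theorem Sg3_eq (n m : ℕ) : Sg 3 n m = Pl n m 3 - 3 * Pl n m 2 + 3 * Pl n m 1 - Pl n m 0 := by
  unfold Sg Pl
  rw [mul_sum, mul_sum, ← sum_sub_distrib, ← sum_add_distrib, ← sum_sub_distrib]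
  apply sum_congr rfl
  intro j _
  simp [nab]; ring_nf
theorem Sg4_eq (n m : ℕ) : Sg 4 n m =
    Pl n m 4 - 4 * Pl n m 3 + 6 * Pl n m 2 - 4 * Pl n m 1 + Pl n m 0 := by
  unfold Sg Pl
  rw [mul_sum, mul_sum, mul_sum, ← sum_sub_distrib, ← sum_add_distrib, ← sum_sub_distrib,
    ← sum_add_distrib]
  apply sum_congr rfl
  intro j _
  simp [nab]; ring_nf

/-- differences of the elementary part -/
noncomputable def Eg (k n m : ℕ) : ℝ := (-1) ^ k * (nab 1)^[k+1] Real.log ((m:ℝ) * n - 1)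

theorem Eg0_eq (n m : ℕ) : - Eg 0 n m = Tl n m 2 - 2 * Tl n m 1 := by
  simp [Eg, nab, Tl, sum_range_succ]; ring_nf
theorem Eg1_eq (n m : ℕ) : - Eg 1 n m = Tl n m 3 - 3 * Tl n m 2 + 3 * Tl n m 1 := by
  simp [Eg, nab, Tl, sum_range_succ]; ring_nf
theorem Eg2_eq (n m : ℕ) : - Eg 2 n m = Tl n m 4 - 4 * Tl n m 3 + 6 * Tl n m 2 - 4 * Tl n m 1 := by
  simp [Eg, nab, Tl, sum_range_succ]; ring_nf

theorem Eg_bounds (k n m : ℕ) (h : ((k+2 : ℕ):ℝ) < (m:ℝ) * n) :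
    Nat.factorial k / ((m:ℝ) * n - 1) ^ (k+1) ≤ Eg k n m ∧
    Eg k n m ≤ Nat.factorial k / ((m:ℝ) * n - (k+2 : ℕ)) ^ (k+1) := by
  have := nab_log 1 one_pos k ((m:ℝ) * n - 1) (by push_cast at h ⊢; linarith)
  simp only [one_pow, one_mul] at this
  refine ⟨this.1, this.2.trans (le_of_eq ?_)⟩
  congr 2
  push_cast; ring

theorem exp_lim (r d : ℕ → ℝ) (U : ℝ) (hr : Tendsto r atTop atTop)
    (h : Tendsto (fun t => r t * d t) atTop (𝓝 U)) :
    Tendsto (fun t => r t * (Real.exp (d t) - 1)) atTop (𝓝 U) ∧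
    Tendsto (fun t => Real.exp (d t) - 1) atTop (𝓝 0) := by
  have hd : Tendsto d atTop (𝓝 0) := by
    have := h.mul hr.inv_tendsto_atTop
    rw [mul_zero] at this
    refine this.congr' ?_
    filter_upwards [hr.eventually_gt_atTop 0] with t ht
    simp only [Pi.inv_apply]
    field_simp
  constructor
  · have e : Tendsto (fun t => r t * (Real.exp (d t) - 1 - d t)) atTop (𝓝 0) := by
      have b : Tendsto (fun t => |r t * d t| * |d t|) atTop (𝓝 0) := by
        have := h.abs.mul hd.abs
        simpa using this
      apply squeeze_zero_norm' _ b
      have : ∀ᶠ t in atTop, |d t| ≤ 1 := by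
        have := hd.abs
        rw [abs_zero] at this
        exact this.eventually_le_const one_pos
      filter_upwards [this] with t ht
      have := Real.abs_exp_sub_one_sub_id_le ht
      rw [Real.norm_eq_abs, abs_mul, abs_mul, mul_assoc]
      refine mul_le_mul_of_nonneg_left ?_ (abs_nonneg _)
      rwa [← abs_mul, abs_mul_self, ← sq]
    have := h.add e
    rw [add_zero] at this
    refine this.congr ?_
    intro t; ring
  · have := (Real.continuous_exp.tendsto 0).comp hd
    have := this.sub_const 1
    simpa using this

theorem lim_A (n m : ℕ → ℕ)
    (hn : Tendsto (fun t => (n t : ℝ)) atTop atTop)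
    (c : ℝ) (hc : c ∈ Set.Ioo (0 : ℝ) 1)
    (hratio : Tendsto (fun t => (n t : ℝ) / (m t : ℝ)) atTop (𝓝 c)) (s : ℝ) :
    Tendsto (fun t => ((m t : ℝ) + s) / n t) atTop (𝓝 (1 / c)) := by
  have h1 := hratio.inv₀ hc.1.ne'
  have h2 := h1.add (hn.inv_tendsto_atTop.const_mul s)
  rw [mul_zero, add_zero] at h2
  rw [one_div]
  refine h2.congr ?_
  intro t
  simp only [Pi.inv_apply, inv_div]
  ring

theorem lim_B (n m : ℕ → ℕ) (hn0 : ∀ t, 0 < n t)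
    (hn : Tendsto (fun t => (n t : ℝ)) atTop atTop)
    (c : ℝ) (hc : c ∈ Set.Ioo (0 : ℝ) 1)
    (hratio : Tendsto (fun t => (n t : ℝ) / (m t : ℝ)) atTop (𝓝 c)) (s : ℝ) :
    Tendsto (fun t => ((m t : ℝ) - n t + s) / n t) atTop (𝓝 (1 / c - 1)) := by
  refine ((lim_A n m hn c hc hratio s).sub_const 1).congr ?_
  intro t
  have : (n t : ℝ) ≠ 0 := by have := hn0 t; positivity
  field_simp
  ring

theorem lim_gap (n m : ℕ → ℕ) (hn0 : ∀ t, 0 < n t)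
    (hn : Tendsto (fun t => (n t : ℝ)) atTop atTop)
    (c : ℝ) (hc : c ∈ Set.Ioo (0 : ℝ) 1)
    (hratio : Tendsto (fun t => (n t : ℝ) / (m t : ℝ)) atTop (𝓝 c)) :
    Tendsto (fun t => (m t : ℝ) - n t) atTop atTop := by
  have hb : 0 < 1 / c - 1 := by
    have := one_lt_one_div hc.1 hc.2; linarith
  refine ((lim_B n m hn0 hn c hc hratio 0).pos_mul_atTop hb hn).congr ?_
  intro t
  have : (n t : ℝ) ≠ 0 := by have := hn0 t; positivity
  field_simp
  ring

theorem lim_M (n m : ℕ → ℕ) (hn0 : ∀ t, 0 < n t)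
    (hn : Tendsto (fun t => (n t : ℝ)) atTop atTop)
    (c : ℝ) (hc : c ∈ Set.Ioo (0 : ℝ) 1)
    (hratio : Tendsto (fun t => (n t : ℝ) / (m t : ℝ)) atTop (𝓝 c)) (s : ℝ) :
    Tendsto (fun t => (n t : ℝ) ^ 2 / ((m t : ℝ) * n t - s)) atTop (𝓝 c) := by
  have hi := hn.inv_tendsto_atTop
  have h1 := (lim_A n m hn c hc hratio 0).sub ((hi.mul hi).const_mul s)
  have h2 := h1.inv₀ (by have := hc.1; simp; linarith)
  simp only [mul_zero, sub_zero, one_div, inv_inv] at h2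
  refine h2.congr ?_
  intro t
  have : (n t : ℝ) ≠ 0 := by have := hn0 t; positivity
  simp only [Pi.inv_apply, add_zero]
  rw [← one_div, show (m t : ℝ) / n t - s * ((n t : ℝ)⁻¹ * (n t : ℝ)⁻¹) =
    ((m t : ℝ) * n t - s) / (n t : ℝ) ^ 2 by field_simp]
  rw [one_div_div]

theorem lim_Eg (k : ℕ) (n m : ℕ → ℕ) (hn0 : ∀ t, 0 < n t)
    (hn : Tendsto (fun t => (n t : ℝ)) atTop atTop)
    (c : ℝ) (hc : c ∈ Set.Ioo (0 : ℝ) 1)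
    (hratio : Tendsto (fun t => (n t : ℝ) / (m t : ℝ)) atTop (𝓝 c))
    (hM : ∀ᶠ t in atTop, ((k+2 : ℕ):ℝ) < (m t:ℝ) * n t) :
    Tendsto (fun t => ((n t : ℝ) ^ 2) ^ (k+1) * Eg k (n t) (m t)) atTop
      (𝓝 (Nat.factorial k * c ^ (k+1))) := by
  have L := fun s => ((lim_M n m hn0 hn c hc hratio s).pow (k+1)).const_mul (Nat.factorial k : ℝ)
  refine tendsto_of_tendsto_of_tendsto_of_le_of_le' (L 1) (L ((k+2 : ℕ) : ℝ)) ?_ ?_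
  · filter_upwards [hM] with t ht
    refine le_trans (le_of_eq ?_) (mul_le_mul_of_nonneg_left (Eg_bounds k _ _ ht).1 (by positivity))
    rw [div_pow]; ring
  · filter_upwards [hM] with t ht
    refine le_trans (mul_le_mul_of_nonneg_left (Eg_bounds k _ _ ht).2 (by positivity)) (le_of_eq ?_)
    rw [div_pow]; ring

theorem lim_Sg0 (n m : ℕ → ℕ) (hn0 : ∀ t, 0 < n t)
    (hn : Tendsto (fun t => (n t : ℝ)) atTop atTop)
    (c : ℝ) (hc : c ∈ Set.Ioo (0 : ℝ) 1)
    (hratio : Tendsto (fun t => (n t : ℝ) / (m t : ℝ)) atTop (𝓝 c)) :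
    Tendsto (fun t => (n t : ℝ) ^ 2 * Sg 2 (n t) (m t)) atTop
      (𝓝 (Real.log (1 / c) - Real.log (1 / c - 1))) := by
  have hb : 0 < 1 / c - 1 := by
    have := one_lt_one_div hc.1 hc.2; linarith
  have hg := lim_gap n m hn0 hn c hc hratio
  have L : ∀ s : ℝ, Tendsto (fun t => Real.log ((m t : ℝ) + s) - Real.log ((m t : ℝ) - n t + s)) atTop
      (𝓝 (Real.log (1 / c) - Real.log (1 / c - 1))) := by
    intro s
    refine (((lim_A n m hn c hc hratio s).log (by linarith)).sub
      ((lim_B n m hn0 hn c hc hratio s).log hb.ne')).congr' ?_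
    filter_upwards [hg.eventually_gt_atTop (-s)] with t ht
    have : (0 : ℝ) < n t := by have := hn0 t; positivity
    rw [Real.log_div (by linarith) this.ne', Real.log_div (by linarith) this.ne']
    ring
  have hn2 : ∀ᶠ t in atTop, (2:ℝ) ≤ n t := hn.eventually_ge_atTop 2
  refine tendsto_of_tendsto_of_tendsto_of_le_of_le' (L 1) (L (-2)) ?_ ?_
  · filter_upwards [hn2, hg.eventually_gt_atTop 2] with t h1 h2
    exact (Sg_bounds0 _ _ (by exact_mod_cast h1) h2).1
  · filter_upwards [hn2, hg.eventually_gt_atTop 2] with t h1 h2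
    exact (Sg_bounds0 _ _ (by exact_mod_cast h1) h2).2

theorem lim_Sg1 (q : ℕ) (n m : ℕ → ℕ) (hn0 : ∀ t, 0 < n t)
    (hn : Tendsto (fun t => (n t : ℝ)) atTop atTop)
    (c : ℝ) (hc : c ∈ Set.Ioo (0 : ℝ) 1)
    (hratio : Tendsto (fun t => (n t : ℝ) / (m t : ℝ)) atTop (𝓝 c)) :
    Tendsto (fun t => ((n t : ℝ) ^ 2) ^ (q+2) * Sg (q+3) (n t) (m t)) atTop
      (𝓝 (Nat.factorial q * (((1 / c - 1)⁻¹) ^ (q+1) - ((1 / c)⁻¹) ^ (q+1)))) := by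
  have hb : 0 < 1 / c - 1 := by
    have := one_lt_one_div hc.1 hc.2; linarith
  have hg := lim_gap n m hn0 hn c hc hratio
  have L : ∀ s : ℝ, Tendsto (fun t => (n t : ℝ) ^ (q+1) * (Nat.factorial q *
      (1 / ((m t : ℝ) - n t + s) ^ (q+1) - 1 / ((m t : ℝ) + s) ^ (q+1)))) atTop
      (𝓝 (Nat.factorial q * (((1 / c - 1)⁻¹) ^ (q+1) - ((1 / c)⁻¹) ^ (q+1)))) := by
    intro s
    refine (((((lim_B n m hn0 hn c hc hratio s).inv₀ hb.ne').pow (q+1)).sub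
      (((lim_A n m hn c hc hratio s).inv₀ (by linarith)).pow (q+1))).const_mul
        (Nat.factorial q : ℝ)).congr ?_
    intro t
    rw [inv_div, inv_div, div_pow, div_pow]
    ring
  have hn2 : ∀ᶠ t in atTop, ((q+3 : ℕ):ℝ) ≤ n t := hn.eventually_ge_atTop _
  have e : ∀ t, ((n t : ℝ) ^ 2) ^ (q+2) * Sg (q+3) (n t) (m t) =
      (n t : ℝ) ^ (q+1) * ((n t : ℝ) ^ (q+3) * Sg (q+3) (n t) (m t)) := by
    intro t; rw [← mul_assoc, ← pow_add, ← pow_mul]; congr 2; ring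
  simp only [e]
  refine tendsto_of_tendsto_of_tendsto_of_le_of_le' (L 1) (L (-2)) ?_ ?_
  · filter_upwards [hn2, hg.eventually_gt_atTop 2] with t h1 h2
    exact mul_le_mul_of_nonneg_left (Sg_bounds1 q _ _ (by exact_mod_cast h1) h2).1 (by positivity)
  · filter_upwards [hn2, hg.eventually_gt_atTop 2] with t h1 h2
    exact mul_le_mul_of_nonneg_left (Sg_bounds1 q _ _ (by exact_mod_cast h1) h2).2 (by positivity)

theorem lim_d1 (n m : ℕ → ℕ) (hn0 : ∀ t, 0 < n t)
    (hn : Tendsto (fun t => (n t : ℝ)) atTop atTop)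
    (c : ℝ) (hc : c ∈ Set.Ioo (0 : ℝ) 1)
    (hratio : Tendsto (fun t => (n t : ℝ) / (m t : ℝ)) atTop (𝓝 c)) :
    Tendsto (fun t => Tl (n t) (m t) 1 + Sg 1 (n t) (m t)) atTop
      (𝓝 (1 + (1 - c) / c * Real.log (1 - c))) := by
  have hb : 0 < 1 / c - 1 := by
    have := one_lt_one_div hc.1 hc.2; linarith
  have hg := lim_gap n m hn0 hn c hc hratio
  have hi := hn.inv_tendsto_atTop
  -- elementary part
  have hlim : Real.log (1 / c) - ((1 / c) * Real.log (1 / c) - 1 / c)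
      + ((1 / c - 1) * Real.log (1 / c - 1) - (1 / c - 1)) = 1 + (1 - c) / c * Real.log (1 - c) := by
    have h1 : 1 / c - 1 = (1 - c) / c := by have := hc.1.ne'; field_simp
    have h2 : Real.log (1 / c - 1) = Real.log (1 - c) - Real.log c := by
      rw [h1, Real.log_div (by linarith [hc.2]) hc.1.ne']
    have h3 : Real.log (1 / c) = - Real.log c := by rw [one_div, Real.log_inv]
    rw [h2, h3, h1]
    have := hc.1.ne'
    field_simp
    ring
  have hMn : Tendsto (fun t => ((m t : ℝ) * n t - 1) / ((n t : ℝ) ^ 2)) atTop (𝓝 (1 / c)) := by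
    have := (lim_M n m hn0 hn c hc hratio 1).inv₀ hc.1.ne'
    simp only [inv_div] at this
    rwa [one_div]
  have L : ∀ s : ℝ, Tendsto (fun t => Tl (n t) (m t) 1 +
      - (1 / (n t : ℝ) * (Lam ((m t : ℝ) + s) - Lam ((m t : ℝ) - n t + s)))) atTop
      (𝓝 (1 + (1 - c) / c * Real.log (1 - c))) := by
    intro s
    rw [← hlim]
    have tA := lim_A n m hn c hc hratio s
    have tB := lim_B n m hn0 hn c hc hratio s
    have lA := tA.log (by linarith)
    have lB := tB.log hb.ne'
    refine (((hMn.log (by linarith)).sub ((tA.mul lA).sub tA)).add ((tB.mul lB).sub tB)).congr' ?_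
    filter_upwards [hg.eventually_gt_atTop (-s), hg.eventually_gt_atTop 2] with t ht h2
    have hnp : (0 : ℝ) < n t := by have := hn0 t; positivity
    have hn1 : (1 : ℝ) ≤ n t := by exact_mod_cast hn0 t
    have hM : (0:ℝ) < (m t : ℝ) * n t - 1 := by nlinarith
    rw [Real.log_div (by linarith) hnp.ne', Real.log_div (by linarith) hnp.ne',
      Real.log_div hM.ne' (by positivity), Real.log_pow]
    simp only [Tl, Lam, sum_range_one, Nat.cast_zero, Nat.cast_one, sub_zero, one_mul, Nat.cast_ofNat]
    field_simp
    ring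
  refine tendsto_of_tendsto_of_tendsto_of_le_of_le' (L 1) (L (-2)) ?_ ?_
  · filter_upwards [hg.eventually_gt_atTop 2] with t h2
    have := (Sg_bounds_one _ _ (hn0 t) h2).1
    linarith
  · filter_upwards [hg.eventually_gt_atTop 2] with t h2
    have := (Sg_bounds_one _ _ (hn0 t) h2).2
    simp only [sub_eq_add_neg] at this ⊢
    linarith

theorem cumulant_lim (r d1 d2 d3 d4 : ℕ → ℝ) (E U V W : ℝ) (hr : Tendsto r atTop atTop)
    (h1 : Tendsto d1 atTop (𝓝 E))
    (h2 : Tendsto (fun t => r t * d2 t) atTop (𝓝 U))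
    (h3 : Tendsto (fun t => r t ^ 2 * d3 t) atTop (𝓝 V))
    (h4 : Tendsto (fun t => r t ^ 3 * d4 t) atTop (𝓝 W)) :
    Tendsto (fun t => r t ^ 3 * (Real.exp (4 * d1 t + 6 * d2 t + 4 * d3 t + d4 t)
      - 4 * Real.exp (3 * d1 t + 3 * d2 t + d3 t) * Real.exp (d1 t)
      - 3 * (Real.exp (2 * d1 t + d2 t)) ^ 2
      + 12 * Real.exp (2 * d1 t + d2 t) * (Real.exp (d1 t)) ^ 2
      - 6 * (Real.exp (d1 t)) ^ 4)) atTop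
      (𝓝 (Real.exp E ^ 4 * (16 * U ^ 3 + 12 * U * V + W))) := by
  obtain ⟨u1, u0⟩ := exp_lim r d2 U hr h2
  obtain ⟨v1, v0⟩ := exp_lim (fun t => r t ^ 2) d3 V
    ((tendsto_pow_atTop (by norm_num)).comp hr) h3
  obtain ⟨w1, _⟩ := exp_lim (fun t => r t ^ 3) d4 W
    ((tendsto_pow_atTop (by norm_num)).comp hr) h4
  have e1 := ((Real.continuous_exp.tendsto E).comp h1).pow 4
  have rv : Tendsto (fun t => r t * (Real.exp (d3 t) - 1)) atTop (𝓝 0) := by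
    have := v1.mul hr.inv_tendsto_atTop
    rw [mul_zero] at this
    refine this.congr' ?_
    filter_upwards [hr.eventually_gt_atTop 0] with t ht
    simp only [Pi.inv_apply]
    field_simp
  have hcont : Continuous (fun z : ℝ × ℝ × ℝ × ℝ × ℝ × ℝ × ℝ =>
      match z with
      | (e, u, v, A, B, C, D) => e * (C * (1+u)^6 * (1+v)^4 + A^3*(16+15*u+6*u^2+u^3)
        + B * (4 * (1+u)^3 * A * (3+3*u+u^2) + (1+u)^6 * D * (6+4*v+v^2)))) := by
    fun_prop
  have T := (hcont.tendsto (Real.exp E ^ 4, 0, 0, U, V, W, 0)).comp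
    (e1.prodMk_nhds (u0.prodMk_nhds (v0.prodMk_nhds (u1.prodMk_nhds
      (v1.prodMk_nhds (w1.prodMk_nhds rv))))))
  have hl : Real.exp E ^ 4 * (16 * U ^ 3 + 12 * U * V + W) = 
     Real.exp E ^ 4 * (W * (1+0)^6 * (1+0)^4 + U^3*(16+15*0+6*0^2+0^3)
        + V * (4 * (1+0)^3 * U * (3+3*0+0^2) + (1+0)^6 * 0 * (6+4*0+0^2))) := by ring
  rw [hl]
  refine T.congr ?_
  intro t
  have x4 : Real.exp (4 * d1 t + 6 * d2 t + 4 * d3 t + d4 t) =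
      Real.exp (d1 t) ^ 4 * Real.exp (d2 t) ^ 6 * Real.exp (d3 t) ^ 4 * Real.exp (d4 t) := by
    simp only [Real.exp_add, ← Real.exp_nat_mul, Nat.cast_ofNat]
  have x3 : Real.exp (3 * d1 t + 3 * d2 t + d3 t) =
      Real.exp (d1 t) ^ 3 * Real.exp (d2 t) ^ 3 * Real.exp (d3 t) := by
    simp only [Real.exp_add, ← Real.exp_nat_mul, Nat.cast_ofNat]
  have x2 : Real.exp (2 * d1 t + d2 t) =
      Real.exp (d1 t) ^ 2 * Real.exp (d2 t) := by
    simp only [Real.exp_add, ← Real.exp_nat_mul, Nat.cast_ofNat]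
  rw [x4, x3, x2]
  simp only [Function.comp]
  generalize Real.exp (d1 t) = a
  generalize Real.exp (d2 t) = b
  generalize Real.exp (d3 t) = x
  generalize Real.exp (d4 t) = y
  ring

/-- limit of `n⁶` times the fourth cumulant of the GLRT statistic under `H₀`
when `n → ∞` and `n/m → c̄ ∈ (0,1)`. -/
theorem mu0_fourth_cumulant_tendsto (n m : ℕ → ℕ) (hn0 : ∀ t, 0 < n t)
    (hnm : ∀ t, n t ≤ m t)
    (hn : Tendsto (fun t => (n t : ℝ)) atTop atTop)
    (c : ℝ) (hc : c ∈ Set.Ioo (0 : ℝ) 1)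
    (hratio : Tendsto (fun t => (n t : ℝ) / (m t : ℝ)) atTop (𝓝 c)) :
    Tendsto
      (fun t => (n t : ℝ) ^ 6 *
        (mu0 4 (n t) (m t) - 4 * mu0 3 (n t) (m t) * mu0 1 (n t) (m t)
          - 3 * (mu0 2 (n t) (m t)) ^ 2
          + 12 * mu0 2 (n t) (m t) * (mu0 1 (n t) (m t)) ^ 2
          - 6 * (mu0 1 (n t) (m t)) ^ 4))
      atTop
      (𝓝 (-(Real.exp 1 ^ 4) * (1 - c) ^ (4 * (1 - c) / c - 2) *
        (c ^ 3 * (16 + c * (6 * c - 23)) - 12 * (1 - c) * c ^ 2 * (3 * c - 4) * Real.log (1 - c)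
          + 48 * c * (1 - c) ^ 2 * (Real.log (1 - c)) ^ 2
          + 16 * (1 - c) ^ 2 * (Real.log (1 - c)) ^ 3))) := by
  have hc0 := hc.1
  have hc1 : 0 < 1 - c := by linarith [hc.2]
  have hg := lim_gap n m hn0 hn c hc hratio
  have hmn : ∀ᶠ t in atTop, (4:ℝ) < (m t : ℝ) * n t := by
    filter_upwards [hg.eventually_gt_atTop 4] with t ht
    have hn1 : (1 : ℝ) ≤ n t := by exact_mod_cast hn0 t
    nlinarith
  have b : 1 / c - 1 = (1 - c) / c := by field_simp
  -- the four differences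
  have h1 := lim_d1 n m hn0 hn c hc hratio
  have h2 := (lim_Sg0 n m hn0 hn c hc hratio).sub (lim_Eg 0 n m hn0 hn c hc hratio
    (hmn.mono fun t ht => by norm_num; linarith))
  have h3 := (lim_Sg1 0 n m hn0 hn c hc hratio).sub (lim_Eg 1 n m hn0 hn c hc hratio
    (hmn.mono fun t ht => by norm_num; linarith))
  have h4 := (lim_Sg1 1 n m hn0 hn c hc hratio).sub (lim_Eg 2 n m hn0 hn c hc hratio
    (hmn.mono fun t ht => by norm_num; linarith))
  have K := cumulant_lim (fun t => (n t : ℝ) ^ 2) _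
    (fun t => Sg 2 (n t) (m t) - Eg 0 (n t) (m t))
    (fun t => Sg 3 (n t) (m t) - Eg 1 (n t) (m t))
    (fun t => Sg 4 (n t) (m t) - Eg 2 (n t) (m t)) _ _ _ _
    ((tendsto_pow_atTop (by norm_num)).comp hn) h1
    (h2.congr fun t => by ring) (h3.congr fun t => by ring) (h4.congr fun t => by ring)
  have hlog : Real.log (1 / c) - Real.log (1 / c - 1) = - Real.log (1 - c) := by
    rw [b, Real.log_div hc1.ne' hc0.ne', one_div, Real.log_inv]; ring
  rw [hlog, b, inv_div, one_div, inv_inv] at K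
  have hE : Real.exp (1 + (1 - c) / c * Real.log (1 - c)) ^ 4 =
      Real.exp 1 ^ 4 * ((1 - c) ^ (4 * (1 - c) / c - 2) * (1 - c) ^ 2) := by
    rw [← Real.rpow_natCast (1 - c) 2, ← Real.rpow_add hc1, Real.exp_add, mul_pow,
      Real.rpow_def_of_pos hc1, ← Real.exp_nat_mul (_ * _)]
    congr 2
    push_cast
    ring
  rw [hE] at K
  have hfin : Real.exp 1 ^ 4 * ((1 - c) ^ (4 * (1 - c) / c - 2) * (1 - c) ^ 2) *
      (16 * (-Real.log (1 - c) - (Nat.factorial 0 : ℕ) * c ^ (0 + 1)) ^ 3 +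
        12 * (-Real.log (1 - c) - (Nat.factorial 0 : ℕ) * c ^ (0 + 1)) *
          ((Nat.factorial 0 : ℕ) * ((c / (1 - c)) ^ (0 + 1) - c ^ (0 + 1)) -
            (Nat.factorial 1 : ℕ) * c ^ (1 + 1)) +
        ((Nat.factorial 1 : ℕ) * ((c / (1 - c)) ^ (1 + 1) - c ^ (1 + 1)) -
          (Nat.factorial 2 : ℕ) * c ^ (2 + 1))) =
      -(Real.exp 1 ^ 4) * (1 - c) ^ (4 * (1 - c) / c - 2) *
        (c ^ 3 * (16 + c * (6 * c - 23)) - 12 * (1 - c) * c ^ 2 * (3 * c - 4) * Real.log (1 - c)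
          + 48 * c * (1 - c) ^ 2 * (Real.log (1 - c)) ^ 2
          + 16 * (1 - c) ^ 2 * (Real.log (1 - c)) ^ 3) := by
    generalize (1 - c) ^ (4 * (1 - c) / c - 2) = w
    generalize Real.log (1 - c) = l
    simp only [Nat.factorial, Nat.cast_one, zero_add, pow_one, one_mul, mul_one, Nat.succ_eq_add_one,
      Nat.reduceAdd, Nat.cast_ofNat]
    field_simp
    ring
  rw [hfin] at K
  refine K.congr' ?_
  filter_upwards [hmn, hg.eventually_gt_atTop 2, hn.eventually_ge_atTop 4] with t a1 a2 a3
  have a4 : 4 ≤ n t := by exact_mod_cast a3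
  have M : ∀ p : ℕ, p ≤ 4 → mu0 p (n t) (m t) =
      Real.exp (Tl (n t) (m t) p + Pl (n t) (m t) p - Pl (n t) (m t) 0) := by
    intro p hp
    have : (p:ℝ) ≤ 4 := by exact_mod_cast hp
    exact mu0_eq p _ _ (hn0 t) (by linarith) (by omega) a2
  have e0 := Eg0_eq (n t) (m t)
  have e1 := Eg1_eq (n t) (m t)
  have e2 := Eg2_eq (n t) (m t)
  have s1 := Sg1_eq (n t) (m t)
  have s2 := Sg2_eq (n t) (m t)
  have s3 := Sg3_eq (n t) (m t)
  have s4 := Sg4_eq (n t) (m t)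
  rw [M 1 (by norm_num), M 2 (by norm_num), M 3 (by norm_num), M 4 le_rfl, ← pow_mul]
  have r1 : Tl (n t) (m t) 1 + Pl (n t) (m t) 1 - Pl (n t) (m t) 0 =
      Tl (n t) (m t) 1 + Sg 1 (n t) (m t) := by linarith
  have r2 : Tl (n t) (m t) 2 + Pl (n t) (m t) 2 - Pl (n t) (m t) 0 =
      2 * (Tl (n t) (m t) 1 + Sg 1 (n t) (m t)) + (Sg 2 (n t) (m t) - Eg 0 (n t) (m t)) := by
    linarith
  have r3 : Tl (n t) (m t) 3 + Pl (n t) (m t) 3 - Pl (n t) (m t) 0 =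
      3 * (Tl (n t) (m t) 1 + Sg 1 (n t) (m t)) + 3 * (Sg 2 (n t) (m t) - Eg 0 (n t) (m t)) +
        (Sg 3 (n t) (m t) - Eg 1 (n t) (m t)) := by
    linarith
  have r4 : Tl (n t) (m t) 4 + Pl (n t) (m t) 4 - Pl (n t) (m t) 0 =
      4 * (Tl (n t) (m t) 1 + Sg 1 (n t) (m t)) + 6 * (Sg 2 (n t) (m t) - Eg 0 (n t) (m t)) +
        4 * (Sg 3 (n t) (m t) - Eg 1 (n t) (m t)) + (Sg 4 (n t) (m t) - Eg 2 (n t) (m t)) := by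
    linarith
  rw [r1, r2, r3, r4]
end

section
/- Fix an integer p ≥ 3. For each integer n > p, let κ(p,n) be the p-th cumulant associated with the moment sequence q ↦ μ0(q,n,n) (defined for 1 ≤ q ≤ p since p < n). Then lim_{n→∞} n^p·κ(p,n) = e^p·(p−1)!·ζ(p−1), where ζ is the Riemann zeta function. -/
open Finset Filter Topology

/-- Cumulants associated with a sequence of moments `μ`:
`κ(1) = μ(1)` and `κ(p) = μ(p) − Σ_{ℓ=1}^{p−1} C(p−1,ℓ−1)·κ(ℓ)·μ(p−ℓ)` for `p ≥ 2`. -/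
noncomputable def cumulant (μ : ℕ → ℝ) : ℕ → ℝ
  | 0 => 0
  | 1 => μ 1
  | (p + 2) =>
      μ (p + 2) -
        ∑ l ∈ (Finset.range (p + 1)).attach,
          (Nat.choose (p + 1) l.1 : ℝ) * cumulant μ (l.1 + 1) * μ (p + 1 - l.1)
termination_by p => p
decreasing_by
  have h := Finset.mem_range.mp l.2
  omega

/-- The Riemann zeta value `ζ(k) = Σ_{i≥1} 1/i^k` for a natural argument. -/
noncomputable def zetaNat (k : ℕ) : ℝ := ∑' i : ℕ, 1 / ((i : ℝ) + 1) ^ k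

open Asymptotics


/-- Iterated forward differences of a real sequence. -/
noncomputable def dd : ℕ → (ℕ → ℝ) → ℕ → ℝ
  | 0, f => f
  | (k + 1), f => fun q => dd k f (q + 1) - dd k f q

lemma dd_zero (f : ℕ → ℝ) (q : ℕ) : dd 0 f q = f q := rfl

lemma dd_succ (k : ℕ) (f : ℕ → ℝ) (q : ℕ) : dd (k + 1) f q = dd k f (q + 1) - dd k f q := rfl

lemma dd_add' (k l : ℕ) (f : ℕ → ℝ) (q : ℕ) : dd (k + l) f q = dd k (dd l f) q := by
  induction k generalizing q with
  | zero => simp [dd_zero]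
  | succ k ih => rw [Nat.add_right_comm, dd_succ, dd_succ, ih, ih]

lemma dd_fadd (k : ℕ) (f g : ℕ → ℝ) (q : ℕ) :
    dd k (fun i => f i + g i) q = dd k f q + dd k g q := by
  induction k generalizing q with
  | zero => rfl
  | succ k ih => simp only [dd_succ, ih]; ring

lemma dd_smul (k : ℕ) (a : ℝ) (f : ℕ → ℝ) (q : ℕ) :
    dd k (fun i => a * f i) q = a * dd k f q := by
  induction k generalizing q with
  | zero => rfl
  | succ k ih => simp only [dd_succ, ih]; ring

lemma dd_fsub (k : ℕ) (f g : ℕ → ℝ) (q : ℕ) :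
    dd k (fun i => f i - g i) q = dd k f q - dd k g q := by
  induction k generalizing q with
  | zero => rfl
  | succ k ih => simp only [dd_succ, ih]; ring

lemma dd_sum {ι : Type*} (s : Finset ι) (k : ℕ) (f : ι → ℕ → ℝ) (q : ℕ) :
    dd k (fun i => ∑ a ∈ s, f a i) q = ∑ a ∈ s, dd k (f a) q := by
  induction k generalizing q with
  | zero => rfl
  | succ k ih => simp only [dd_succ, ih, Finset.sum_sub_distrib]

lemma dd_shift (k : ℕ) (f : ℕ → ℝ) (q a : ℕ) :
    dd k (fun i => f (i + a)) q = dd k f (q + a) := by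
  induction k generalizing q with
  | zero => rfl
  | succ k ih => simp only [dd_succ, ih]; rw [Nat.add_right_comm]

lemma dd_const (k : ℕ) (a : ℝ) (q : ℕ) : dd (k + 1) (fun _ => a) q = 0 := by
  induction k generalizing q with
  | zero => simp [dd]
  | succ k ih => rw [dd_succ, ih, ih, sub_zero]

lemma dd_linear (k : ℕ) (a : ℝ) (q : ℕ) : dd (k + 2) (fun i => a * (i : ℝ)) q = 0 := by
  have : dd 1 (fun i => a * (i : ℝ)) = fun _ => a := by
    funext i
    simp [dd]; ring
  rw [show k + 2 = (k + 1) + 1 from rfl, dd_add', this, dd_const]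

lemma dd_congr (k : ℕ) (f g : ℕ → ℝ) (q : ℕ) (h : ∀ i ≤ k, f (q + i) = g (q + i)) :
    dd k f q = dd k g q := by
  induction k generalizing q with
  | zero => simpa [dd] using h 0 le_rfl
  | succ k ih =>
    rw [dd_succ, dd_succ, ih, ih]
    · intro i hi; exact h i (by omega)
    · intro i hi
      have := h (i + 1) (by omega)
      rwa [show q + 1 + i = q + (i + 1) by ring]

lemma dd_bound (k : ℕ) (f : ℕ → ℝ) (q : ℕ) (A : ℝ) (h : ∀ i ≤ k, |f (q + i)| ≤ A) :
    |dd k f q| ≤ 2 ^ k * A := by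
  induction k generalizing q with
  | zero => simpa [dd] using h 0 le_rfl
  | succ k ih =>
    rw [dd_succ]
    have h1 := ih q (fun i hi => h i (by omega))
    have h2 := ih (q + 1) (fun i hi => by
      have := h (i + 1) (by omega)
      rwa [show q + 1 + i = q + (i + 1) by ring])
    calc _ ≤ _ := abs_sub _ _
      _ ≤ 2 ^ k * A + 2 ^ k * A := add_le_add h2 h1
      _ = _ := by ring

lemma dd_tendsto (k : ℕ) (F : ℕ → ℕ → ℝ) (f : ℕ → ℝ) (q : ℕ)
    (h : ∀ i ≤ k, Tendsto (fun N => F N (q + i)) atTop (𝓝 (f (q + i)))) :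
    Tendsto (fun N => dd k (F N) q) atTop (𝓝 (dd k f q)) := by
  induction k generalizing q with
  | zero => simpa [dd] using h 0 le_rfl
  | succ k ih =>
    simp only [dd_succ]
    refine (ih (q + 1) ?_).sub (ih q ?_)
    · intro i hi
      have := h (i + 1) (by omega)
      rwa [show q + 1 + i = q + (i + 1) by ring]
    · intro i hi; exact h i (by omega)

lemma dd_eq_fwdDiff (k : ℕ) (f : ℝ → ℝ) (q : ℕ) :
    dd k (fun i => f i) q = (fwdDiff (1 : ℝ))^[k] f q := by
  induction k generalizing q with
  | zero => rfl
  | succ k ih =>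
    rw [dd_succ, ih, ih, Function.iterate_succ_apply', fwdDiff]
    push_cast; rfl

lemma dd_pow_self (k : ℕ) (q : ℕ) : dd k (fun i => (i : ℝ) ^ k) q = (k.factorial : ℝ) := by
  rw [dd_eq_fwdDiff k (fun r => r ^ k), fwdDiff_iter_eq_factorial]
  simp

lemma dd_pow_lt (k j : ℕ) (h : j < k) (q : ℕ) : dd k (fun i => (i : ℝ) ^ j) q = 0 := by
  rw [dd_eq_fwdDiff k (fun r => r ^ j), fwdDiff_iter_pow_eq_zero_of_lt h]
  simp

lemma dd_log_bound (k q : ℕ) : ∃ C : ℝ, 0 ≤ C ∧ ∀ x : ℝ, 0 ≤ x → x * (2 * (q + k + 1)) ≤ 1 →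
    |dd (k + 1) (fun i => Real.log (1 - i * x)) q + k.factorial * x ^ (k + 1)|
      ≤ C * x ^ (k + 2) := by
  refine ⟨2 ^ (k + 1) * (2 * (q + k + 1 : ℝ) ^ (k + 2)), by positivity, ?_⟩
  intro x hx hx2
  have h1 : dd (k + 1) (fun i => ∑ r ∈ range (k + 1), ((i : ℝ) * x) ^ (r + 1) / (r + 1)) q
      = k.factorial * x ^ (k + 1) := by
    have : (fun i : ℕ => ∑ r ∈ range (k + 1), ((i : ℝ) * x) ^ (r + 1) / (r + 1))
      = fun i : ℕ => ∑ r ∈ range (k + 1), (x ^ (r + 1) / (r + 1)) * (i : ℝ) ^ (r + 1) := by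
      funext i
      refine sum_congr rfl fun r _ => ?_
      rw [mul_pow]; ring
    rw [this, dd_sum]
    simp only [dd_smul]
    rw [sum_range_succ, sum_eq_zero, dd_pow_self, Nat.factorial_succ]
    · push_cast
      have : (k : ℝ) + 1 ≠ 0 := by positivity
      field_simp
      ring
    · intro r hr
      rw [dd_pow_lt _ _ (by simpa using hr), mul_zero]
  rw [← h1, add_comm, ← dd_fadd, mul_assoc]
  apply dd_bound
  intro i hi
  have hqi : ((q + i : ℕ) : ℝ) ≤ q + k + 1 := by
    have : q + i ≤ q + k + 1 := by omega
    exact_mod_cast this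
  have hy0 : 0 ≤ ((q + i : ℕ) : ℝ) * x := by positivity
  have hy1 : ((q + i : ℕ) : ℝ) * x ≤ 1 / 2 := by
    have := mul_le_mul_of_nonneg_right hqi hx
    nlinarith
  have hy : |((q + i : ℕ) : ℝ) * x| < 1 := by
    rw [abs_of_nonneg hy0]; linarith
  have := Real.abs_log_sub_add_sum_range_le hy (k + 1)
  refine this.trans ?_
  rw [abs_of_nonneg hy0, div_le_iff₀ (by linarith), mul_pow]
  have h3 : ((q + i : ℕ) : ℝ) ^ (k + 2) * x ^ (k + 2) ≤ (q + k + 1 : ℝ) ^ (k + 2) * x ^ (k + 2) := by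
    gcongr
  have h4 : 0 ≤ (q + k + 1 : ℝ) ^ (k + 2) * x ^ (k + 2) := by positivity
  calc _ ≤ (q + k + 1 : ℝ) ^ (k + 2) * x ^ (k + 2) := h3
    _ ≤ _ := by nlinarith

lemma dd_log_bound2 (k q : ℕ) : ∃ C : ℝ, 0 ≤ C ∧ ∀ x : ℝ, 0 ≤ x → x * (2 * (q + k + 1)) ≤ 1 →
    |dd (k + 1) (fun i => Real.log (1 - i * x)) q| ≤ C * x ^ (k + 1) := by
  obtain ⟨C, hC, h⟩ := dd_log_bound k q
  refine ⟨C + k.factorial, by positivity, fun x hx hx2 => ?_⟩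
  have h1 := h x hx hx2
  have hx1 : x ≤ 1 := by
    have : (0 : ℝ) ≤ q + k := by positivity
    nlinarith
  have h2 : x ^ (k + 2) ≤ x ^ (k + 1) := pow_le_pow_of_le_one hx hx1 (by omega)
  have h3 : C * x ^ (k + 2) ≤ C * x ^ (k + 1) := by gcongr
  have h4 : 0 ≤ (k.factorial : ℝ) * x ^ (k + 1) := by positivity
  rw [abs_le] at h1 ⊢
  constructor <;> linarith [h1.1, h1.2]

lemma dd_log_tendsto (k q : ℕ) (x : ℕ → ℝ) (hx : ∀ n, 0 < x n) (hx0 : Tendsto x atTop (𝓝 0)) :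
    Tendsto (fun n => dd (k + 1) (fun i => Real.log (1 - i * x n)) q / x n ^ (k + 1)) atTop
      (𝓝 (-(k.factorial : ℝ))) := by
  obtain ⟨C, hC, h⟩ := dd_log_bound k q
  rw [tendsto_iff_dist_tendsto_zero]
  have hev : ∀ᶠ n in atTop, x n * (2 * (q + k + 1 : ℝ)) ≤ 1 := by
    have : Tendsto (fun n => x n * (2 * (q + k + 1 : ℝ))) atTop (𝓝 (0 * (2 * (q + k + 1 : ℝ)))) :=
      hx0.mul_const _
    rw [zero_mul] at this
    exact (this.eventually (gt_mem_nhds one_pos)).mono fun n hn => le_of_lt hn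
  have h0 : Tendsto (fun n => C * x n) atTop (𝓝 0) := by simpa using hx0.const_mul C
  refine squeeze_zero' (Eventually.of_forall fun n => dist_nonneg) ?_ h0
  filter_upwards [hev] with n hn
  have h1 := h (x n) (hx n).le hn
  have hp : 0 < x n ^ (k + 1) := pow_pos (hx n) _
  rw [Real.dist_eq, sub_neg_eq_add, div_add' _ _ _ hp.ne', abs_div, abs_of_pos hp,
    div_le_iff₀ hp]
  refine h1.trans (le_of_eq ?_)
  ring

/-- The difference of `log (1 - i / (n (m+1)))`. -/
noncomputable def fm (k q n m : ℕ) : ℝ :=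
  dd (k + 2) (fun i => Real.log (1 - i * (1 / ((n : ℝ) * (m + 1))))) q

lemma fm_bound (k q : ℕ) : ∃ C : ℝ, 0 ≤ C ∧ ∀ n m : ℕ, 2 * (q + k + 2) ≤ n →
    |fm k q n m| ≤ C * (1 / ((n : ℝ) * (m + 1))) ^ (k + 2) := by
  obtain ⟨C, hC, h⟩ := dd_log_bound2 (k + 1) q
  refine ⟨C, hC, fun n m hn => ?_⟩
  have hn' : (2 * (q + k + 2) : ℝ) ≤ n := by exact_mod_cast hn
  have hn0 : (0 : ℝ) < n := lt_of_lt_of_le (by positivity) hn'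
  refine h _ (by positivity) ?_
  rw [one_div, inv_mul_le_iff₀ (by positivity)]
  push_cast
  have : (0 : ℝ) ≤ m := by positivity
  nlinarith

lemma dd_logGammaSeq (k q n j N : ℕ) (hn : q + k + 2 < n) :
    dd (k + 2) (fun i => Real.BohrMollerup.logGammaSeq (1 - (i : ℝ) / n + j) N) q
      = - ∑ l ∈ range (N + 1), fm k q n (l + j) := by
  have hn0 : (0 : ℝ) < n := by exact_mod_cast (by omega : 0 < n)
  have h1 : dd (k + 2) (fun i => Real.BohrMollerup.logGammaSeq (1 - (i : ℝ) / n + j) N) q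
      = dd (k + 2) (fun i => (((-(Real.log N) / n) * (i : ℝ)) +
          ((1 + j) * Real.log N + Real.log N.factorial
            - ∑ l ∈ range (N + 1), Real.log ((l + j : ℕ) + 1)))
        + (-1) * ∑ l ∈ range (N + 1), Real.log (1 - i * (1 / ((n : ℝ) * ((l + j : ℕ) + 1))))) q := by
    apply dd_congr
    intro i hi
    have hlt : ((q + i : ℕ) : ℝ) < n := by exact_mod_cast (by omega : q + i < n)
    have hs : ∑ l ∈ range (N + 1), Real.log (1 - ((q + i : ℕ) : ℝ) / n + j + l)
        = ∑ l ∈ range (N + 1), Real.log ((l + j : ℕ) + 1) +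
          ∑ l ∈ range (N + 1),
            Real.log (1 - ((q + i : ℕ) : ℝ) * (1 / ((n : ℝ) * ((l + j : ℕ) + 1)))) := by
      rw [← sum_add_distrib]
      refine sum_congr rfl fun l _ => ?_
      have hpos : (0 : ℝ) < (l + j : ℕ) + 1 := by positivity
      have hpos2 : 0 < 1 - ((q + i : ℕ) : ℝ) * (1 / ((n : ℝ) * ((l + j : ℕ) + 1))) := by
        rw [mul_one_div, sub_pos, div_lt_one (by positivity)]
        have : (0 : ℝ) ≤ (l + j : ℕ) := by positivity
        nlinarith
      rw [← Real.log_mul hpos.ne' hpos2.ne']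
      congr 1
      push_cast at hpos ⊢
      field_simp
      ring
    rw [Real.BohrMollerup.logGammaSeq, hs]
    ring
  rw [h1, dd_fadd, dd_fadd, dd_linear, dd_const, dd_smul, dd_sum]
  simp [fm]

lemma fm_summable (k q n : ℕ) (hn : 2 * (q + k + 2) ≤ n) : Summable (fun m => fm k q n m) := by
  obtain ⟨C, hC, h⟩ := fm_bound k q
  have hs : Summable (fun m : ℕ => C * (1 / ((m : ℝ) + 1) ^ 2)) := by
    apply Summable.mul_left
    have := (summable_nat_add_iff 1).mpr (Real.summable_one_div_nat_pow.mpr (one_lt_two))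
    simpa using this
  refine Summable.of_norm_bounded hs fun m => ?_
  rw [Real.norm_eq_abs]
  refine (h n m hn).trans ?_
  gcongr
  have hn1 : (1 : ℝ) ≤ n := by exact_mod_cast (by omega : 1 ≤ n)
  have hm1 : (1 : ℝ) ≤ (m : ℝ) + 1 := by
    have : (0 : ℝ) ≤ m := by positivity
    linarith
  have h1 : 1 / ((n : ℝ) * (m + 1)) ≤ 1 / ((m : ℝ) + 1) := by
    apply one_div_le_one_div_of_le (by linarith)
    nlinarith
  have h2 : 1 / ((m : ℝ) + 1) ≤ 1 := by
    rw [div_le_one (by linarith)]; exact hm1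
  calc (1 / ((n : ℝ) * (m + 1))) ^ (k + 2) ≤ (1 / ((m : ℝ) + 1)) ^ (k + 2) := by gcongr
    _ ≤ (1 / ((m : ℝ) + 1)) ^ 2 := pow_le_pow_of_le_one (by positivity) h2 (by omega)
    _ = _ := by rw [one_div_pow]

lemma hasSum_fm (k q n j : ℕ) (hn : 2 * (q + k + 2) ≤ n) :
    HasSum (fun l => fm k q n (l + j))
      (-dd (k + 2) (fun i => Real.log (Real.Gamma (1 - (i : ℝ) / n + j))) q) := by
  have hs : Summable (fun l => fm k q n (l + j)) :=
    (summable_nat_add_iff j).mpr (fm_summable k q n hn)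
  have ht := (hs.hasSum.tendsto_sum_nat).comp (tendsto_add_atTop_nat 1)
  have ht2 : Tendsto (fun N =>
      dd (k + 2) (fun i => Real.BohrMollerup.logGammaSeq (1 - (i : ℝ) / n + j) N) q) atTop
      (𝓝 (dd (k + 2) (fun i => Real.log (Real.Gamma (1 - (i : ℝ) / n + j))) q)) := by
    apply dd_tendsto (k + 2)
      (fun N i => Real.BohrMollerup.logGammaSeq (1 - (i : ℝ) / n + j) N)
    intro i hi
    apply Real.BohrMollerup.tendsto_log_gamma
    have hn0 : (0 : ℝ) < n := by exact_mod_cast (by omega : 0 < n)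
    have hlt : ((q + i : ℕ) : ℝ) < n := by exact_mod_cast (by omega : q + i < n)
    have : ((q + i : ℕ) : ℝ) / n < 1 := by rwa [div_lt_one hn0]
    have : (0 : ℝ) ≤ j := by positivity
    linarith
  have heq : (fun N =>
      dd (k + 2) (fun i => Real.BohrMollerup.logGammaSeq (1 - (i : ℝ) / n + j) N) q)
      = fun N => - ∑ l ∈ range (N + 1), fm k q n (l + j) :=
    funext fun N => dd_logGammaSeq k q n j N (by omega)
  rw [heq] at ht2
  have := tendsto_nhds_unique ht ((ht2.neg).congr (fun N => by simp))
  rw [← this]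
  exact hs.hasSum

/-- number of `j < n` with `j ≤ m`. -/
noncomputable def cnt (n m : ℕ) : ℝ := ∑ j ∈ range n, if j ≤ m then (1 : ℝ) else 0

lemma cnt_eq (n m : ℕ) : cnt n m = (min n (m + 1) : ℕ) := by
  unfold cnt
  rw [sum_boole]
  congr 1
  have : (range n).filter (fun j => j ≤ m) = range (min n (m + 1)) := by
    ext j; simp
  rw [this, card_range]

/-- The sum of the log Gamma terms. -/
noncomputable def sg (n i : ℕ) : ℝ := ∑ j ∈ range n, Real.log (Real.Gamma (1 - (i : ℝ) / n + j))

lemma hasSum_sg (k q n : ℕ) (hn : 2 * (q + k + 2) ≤ n) :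
    HasSum (fun m => cnt n m * fm k q n m) (-dd (k + 2) (sg n) q) := by
  have h1 : ∀ j ∈ range n, HasSum (fun m => if j ≤ m then fm k q n m else 0)
      (-dd (k + 2) (fun i => Real.log (Real.Gamma (1 - (i : ℝ) / n + j))) q) := by
    intro j _
    have := hasSum_fm k q n j hn
    have h2 : (fun l => fm k q n (l + j))
        = fun l => (fun m => if j ≤ m then fm k q n m else 0) (l + j) := by
      funext l; simp
    rw [h2] at this
    have h4 := (hasSum_nat_add_iff (f := fun m => if j ≤ m then fm k q n m else 0) j).mp this
    rw [sum_eq_zero, add_zero] at h4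
    · exact h4
    · intro i hi
      have := mem_range.mp hi
      simp; omega
  have h3 := hasSum_sum h1
  rw [sum_neg_distrib, ← dd_sum] at h3
  have h5 : (fun m => cnt n m * fm k q n m)
      = fun m => ∑ j ∈ range n, if j ≤ m then fm k q n m else 0 := by
    funext m
    rw [cnt, sum_mul]
    refine sum_congr rfl fun j _ => ?_
    split_ifs <;> simp
  rw [h5]
  exact h3

lemma sg_tendsto (k q : ℕ) :
    Tendsto (fun n : ℕ => (n : ℝ) ^ (k + 3) * dd (k + 3) (sg n) q) atTop
      (𝓝 ((k + 2).factorial * zetaNat (k + 2))) := by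
  obtain ⟨C, hC, h⟩ := fm_bound (k + 1) q
  have hsum : Summable (fun m : ℕ => C * (1 / ((m : ℝ) + 1) ^ (k + 2))) := by
    apply Summable.mul_left
    have := (summable_nat_add_iff 1).mpr
      (Real.summable_one_div_nat_pow.mpr (by omega : 1 < k + 2))
    simpa using this
  have key : Tendsto (fun n : ℕ => ∑' m, (-(n : ℝ) ^ (k + 3)) * (cnt n m * fm (k + 1) q n m)) atTop
      (𝓝 (∑' m : ℕ, ((k + 2).factorial : ℝ) * (1 / ((m : ℝ) + 1) ^ (k + 2)))) := by
    refine tendsto_tsum_of_dominated_convergence hsum ?_ ?_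
    · intro m
      have ht := dd_log_tendsto (k + 2) q (fun n => 1 / (((n : ℝ) + 1) * (m + 1)))
        (fun n => by positivity) (by
          have := (tendsto_one_div_add_atTop_nhds_zero_nat (𝕜 := ℝ)).mul_const (1 / ((m : ℝ) + 1))
          rw [zero_mul] at this
          refine this.congr fun n => ?_
          rw [div_mul_div_comm, one_mul])
      have ht' : Tendsto (fun n : ℕ => fm (k + 1) q n m / (1 / ((n : ℝ) * (m + 1))) ^ (k + 3)) atTop
          (𝓝 (-((k + 2).factorial : ℝ))) := by
        rw [← tendsto_add_atTop_iff_nat 1]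
        simpa [fm] using ht
      have ht2 := (ht'.neg).mul_const (1 / ((m : ℝ) + 1) ^ (k + 2))
      rw [neg_neg] at ht2
      refine ht2.congr' ?_
      filter_upwards [eventually_ge_atTop (m + 1)] with n hn
      have hn0 : (0 : ℝ) < n := by exact_mod_cast (by omega : 0 < n)
      rw [cnt_eq, min_eq_right hn]
      push_cast
      simp only [one_div, inv_pow, mul_pow]
      field_simp
      ring
    · filter_upwards [eventually_ge_atTop (2 * (q + (k + 1) + 2))] with n hn m
      have hn0 : (0 : ℝ) < n := by exact_mod_cast (by omega : 0 < n)
      rw [norm_mul, norm_mul, norm_neg, Real.norm_of_nonneg (by positivity : (0 : ℝ) ≤ (n : ℝ) ^ (k + 3)),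
        Real.norm_eq_abs, Real.norm_eq_abs]
      have h1 := h n m hn
      have h2 : |cnt n m| ≤ (m : ℝ) + 1 := by
        rw [cnt_eq, abs_of_nonneg (by positivity)]
        exact_mod_cast min_le_right n (m + 1)
      calc _ ≤ (n : ℝ) ^ (k + 3) * (((m : ℝ) + 1) * (C * (1 / ((n : ℝ) * (m + 1))) ^ (k + 1 + 2))) := by
            gcongr
        _ = _ := by
            simp only [one_div, inv_pow, mul_pow]
            field_simp
            ring
  rw [tsum_mul_left] at key
  refine key.congr' ?_
  filter_upwards [eventually_ge_atTop (2 * (q + (k + 1) + 2))] with n hn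
  rw [tsum_mul_left, (hasSum_sg (k + 1) q n hn).tsum_eq]
  ring_nf

lemma sg_two (q : ℕ) :
    (fun n : ℕ => dd 2 (sg n) q) =O[atTop] (fun n : ℕ => (n : ℝ)⁻¹ ^ 2 * (n : ℝ) ^ (1 / 4 : ℝ)) := by
  obtain ⟨C, hC, h⟩ := fm_bound 0 q
  have hsum : Summable (fun m : ℕ => ((m : ℝ) + 1) ^ (-(5 / 4) : ℝ)) := by
    have := (summable_nat_add_iff 1).mpr
      (Real.summable_nat_rpow.mpr (by norm_num : (-(5 / 4) : ℝ) < -1))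
    simpa using this
  refine IsBigO.of_bound (C * ∑' m : ℕ, ((m : ℝ) + 1) ^ (-(5 / 4) : ℝ)) ?_
  filter_upwards [eventually_ge_atTop (2 * (q + 0 + 2))] with n hn
  have hn0 : (0 : ℝ) < n := by exact_mod_cast (by omega : 0 < n)
  have hs := hasSum_sg 0 q n hn
  rw [← norm_neg, ← hs.tsum_eq, Real.norm_of_nonneg (by positivity : 0 ≤ (n : ℝ)⁻¹ ^ 2 * (n : ℝ) ^ (1 / 4 : ℝ))]
  rw [show (C * ∑' m : ℕ, ((m : ℝ) + 1) ^ (-(5 / 4) : ℝ)) * ((n : ℝ)⁻¹ ^ 2 * (n : ℝ) ^ (1 / 4 : ℝ))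
    = ∑' m : ℕ, (C * ((n : ℝ)⁻¹ ^ 2 * (n : ℝ) ^ (1 / 4 : ℝ))) * ((m : ℝ) + 1) ^ (-(5 / 4) : ℝ) by
      rw [tsum_mul_left]; ring]
  apply tsum_of_norm_bounded (hsum.mul_left _).hasSum
  intro m
  have hm0 : (0 : ℝ) < (m : ℝ) + 1 := by positivity
  rw [norm_mul, Real.norm_eq_abs, Real.norm_eq_abs]
  have h1 := h n m hn
  have h2 : |cnt n m| ≤ (n : ℝ) ^ (1 / 4 : ℝ) * ((m : ℝ) + 1) ^ (3 / 4 : ℝ) := by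
    rw [cnt_eq, abs_of_nonneg (by positivity)]
    have ha : ((min n (m + 1) : ℕ) : ℝ) ≤ n := by exact_mod_cast min_le_left n (m + 1)
    have hb : ((min n (m + 1) : ℕ) : ℝ) ≤ (m : ℝ) + 1 := by exact_mod_cast min_le_right n (m + 1)
    have hc : (0 : ℝ) < ((min n (m + 1) : ℕ) : ℝ) := by
      exact_mod_cast (by simp; omega : 0 < min n (m + 1))
    calc ((min n (m + 1) : ℕ) : ℝ)
        = ((min n (m + 1) : ℕ) : ℝ) ^ (1 / 4 : ℝ) * ((min n (m + 1) : ℕ) : ℝ) ^ (3 / 4 : ℝ) := by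
          rw [← Real.rpow_add hc]; norm_num
      _ ≤ _ := by gcongr
  calc _ ≤ ((n : ℝ) ^ (1 / 4 : ℝ) * ((m : ℝ) + 1) ^ (3 / 4 : ℝ)) *
        (C * (1 / ((n : ℝ) * (m + 1))) ^ (0 + 2)) := by gcongr
    _ = _ := by
      have : ((m : ℝ) + 1) ^ (-(5 / 4) : ℝ) = ((m : ℝ) + 1) ^ (3 / 4 : ℝ) * (((m : ℝ) + 1) ^ 2)⁻¹ := by
        rw [← Real.rpow_natCast, ← Real.rpow_neg hm0.le, ← Real.rpow_add hm0]
        norm_num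
      rw [this]
      simp only [one_div, inv_pow, mul_pow, zero_add]
      field_simp

/-- Logarithm of the moments. -/
noncomputable def lm (n i : ℕ) : ℝ := Real.log (mu0 i n n)

lemma sq_sub_pos (n i : ℕ) (hi : i < n) : (0 : ℝ) < (n : ℝ) * n - i := by
  have h1 : (i : ℝ) + 1 ≤ n := by exact_mod_cast hi
  have h2 : (0 : ℝ) ≤ i := by positivity
  nlinarith

lemma arg_pos (n i j : ℕ) (hi : i < n) : (0 : ℝ) < 1 - (i : ℝ) / n + j := by
  have hn0 : (0 : ℝ) < n := by exact_mod_cast (by omega : 0 < n)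
  have hlt : (i : ℝ) < n := by exact_mod_cast hi
  have : (i : ℝ) / n < 1 := by rwa [div_lt_one hn0]
  have : (0 : ℝ) ≤ j := by positivity
  linarith

lemma mu0_pos (n i : ℕ) (hi : i < n) : 0 < mu0 i n n := by
  have hn0 : (0 : ℝ) < n := by exact_mod_cast (by omega : 0 < n)
  unfold mu0
  refine mul_pos (div_pos (Real.Gamma_pos_of_pos (by positivity))
    (mul_pos (by positivity) (Real.Gamma_pos_of_pos (sq_sub_pos n i hi)))) (prod_pos fun j _ => ?_)
  rw [sub_self, zero_add]
  exact div_pos (Real.Gamma_pos_of_pos (arg_pos n i j hi)) (Real.Gamma_pos_of_pos (by positivity))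

lemma mu0_zero (n : ℕ) (hn : 0 < n) : mu0 0 n n = 1 := by
  have hn0 : (0 : ℝ) < n := by exact_mod_cast hn
  unfold mu0
  have h1 : Real.Gamma ((n : ℝ) * n) ≠ 0 := (Real.Gamma_pos_of_pos (by positivity)).ne'
  rw [prod_eq_one]
  · simp [h1]
  · intro j _
    have h2 : Real.Gamma ((n : ℝ) - n + 1 + j) ≠ 0 := by
      rw [sub_self, zero_add]
      exact (Real.Gamma_pos_of_pos (by positivity)).ne'
    simp only [Nat.cast_zero, zero_div, sub_zero]
    exact div_self h2

lemma lm_formula (n i : ℕ) (hi : i < n) :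
    lm n i = ((-Real.log n) * i + (Real.log (Real.Gamma ((n : ℝ) * n)) - sg n 0))
      + (sg n i - Real.log (Real.Gamma ((n : ℝ) * n - i))) := by
  have hn0 : (0 : ℝ) < n := by exact_mod_cast (by omega : 0 < n)
  have h1 : Real.Gamma ((n : ℝ) * n) ≠ 0 := (Real.Gamma_pos_of_pos (by positivity)).ne'
  have h2 := (Real.Gamma_pos_of_pos (sq_sub_pos n i hi)).ne'
  have h3 : ∀ j ∈ range n, Real.Gamma ((n : ℝ) - n + 1 - i / n + j) /
      Real.Gamma ((n : ℝ) - n + 1 + j) ≠ 0 := by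
    intro j _
    rw [sub_self, zero_add]
    exact (div_pos (Real.Gamma_pos_of_pos (arg_pos n i j hi))
      (Real.Gamma_pos_of_pos (by positivity))).ne'
  unfold lm mu0
  rw [Real.log_mul (by positivity) (prod_ne_zero_iff.mpr h3), Real.log_prod h3,
    Real.log_div h1 (by positivity), Real.log_mul (by positivity) h2, Real.log_pow]
  have h4 : ∑ j ∈ range n, Real.log (Real.Gamma ((n : ℝ) - n + 1 - i / n + j) /
      Real.Gamma ((n : ℝ) - n + 1 + j)) = sg n i - sg n 0 := by
    unfold sg
    rw [← sum_sub_distrib]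
    refine sum_congr rfl fun j _ => ?_
    rw [sub_self, zero_add, Real.log_div (Real.Gamma_pos_of_pos (arg_pos n i j hi)).ne'
      (Real.Gamma_pos_of_pos (by positivity)).ne']
    simp
  rw [h4]
  ring

lemma dd_gsq (k q n : ℕ) (hn : q + k + 2 < n) :
    dd (k + 2) (fun i => Real.log (Real.Gamma ((n : ℝ) * n - i))) q
      = - dd (k + 1) (fun i => Real.log (1 - i * (1 / ((n : ℝ) * n)))) (q + 1) := by
  have hn0 : (0 : ℝ) < n := by exact_mod_cast (by omega : 0 < n)
  rw [show k + 2 = (k + 1) + 1 from rfl, dd_add', ← dd_shift (k + 1) _ q 1]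
  have : dd (k + 1) (dd 1 fun i => Real.log (Real.Gamma ((n : ℝ) * n - i))) q
      = dd (k + 1) (fun i => (-Real.log ((n : ℝ) * n)) +
        (-1) * Real.log (1 - (i + 1 : ℕ) * (1 / ((n : ℝ) * n)))) q := by
    apply dd_congr
    intro i hi
    rw [dd_succ, dd_zero, dd_zero]
    have hp := sq_sub_pos n (q + i + 1) (by omega)
    have hg : (n : ℝ) * n - (q + i : ℕ) = ((n : ℝ) * n - (q + i + 1 : ℕ)) + 1 := by
      push_cast; ring
    rw [hg, Real.Gamma_add_one hp.ne', Real.log_mul hp.ne' (Real.Gamma_pos_of_pos hp).ne']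
    have hf : (n : ℝ) * n - (q + i + 1 : ℕ)
      = ((n : ℝ) * n) * (1 - (q + i + 1 : ℕ) * (1 / ((n : ℝ) * n))) := by
      field_simp
    have hp2 : 0 < 1 - ((q + i + 1 : ℕ) : ℝ) * (1 / ((n : ℝ) * n)) := by
      rw [hf] at hp
      exact pos_of_mul_pos_right hp (by positivity)
    have hl := Real.log_mul (by positivity : (n : ℝ) * n ≠ 0) hp2.ne'
    rw [← hf] at hl
    rw [hl]
    ring
  rw [this, dd_fadd, dd_const, dd_smul]
  ring

lemma dd_lm (k q n : ℕ) (hn : q + k + 2 < n) :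
    dd (k + 2) (lm n) q = dd (k + 2) (sg n) q
      + dd (k + 1) (fun i => Real.log (1 - i * (1 / ((n : ℝ) * n)))) (q + 1) := by
  have h1 : dd (k + 2) (lm n) q = dd (k + 2) (fun i =>
      ((-Real.log n) * i + (Real.log (Real.Gamma ((n : ℝ) * n)) - sg n 0))
      + (sg n i - Real.log (Real.Gamma ((n : ℝ) * n - i)))) q := by
    apply dd_congr
    intro i hi
    exact lm_formula n (q + i) (by omega)
  rw [h1, dd_fadd, dd_fadd, dd_linear, dd_const, dd_fsub, dd_gsq k q n hn]
  ring

lemma dd_logsq_bound (k q : ℕ) :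
    (fun n : ℕ => dd (k + 1) (fun i => Real.log (1 - i * (1 / ((n : ℝ) * n)))) q)
      =O[atTop] (fun n : ℕ => (n : ℝ)⁻¹ ^ (2 * (k + 1))) := by
  obtain ⟨C, hC, h⟩ := dd_log_bound2 k q
  refine IsBigO.of_bound C ?_
  filter_upwards [eventually_ge_atTop (2 * (q + k + 1))] with n hn
  have hn1 : (2 * (q + k + 1) : ℝ) ≤ n := by exact_mod_cast hn
  have hn0 : (0 : ℝ) < n := lt_of_lt_of_le (by positivity) hn1
  have hn2 : (1 : ℝ) ≤ n := by exact_mod_cast (by omega : 1 ≤ n)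
  have := h (1 / ((n : ℝ) * n)) (by positivity) (by
    rw [one_div, inv_mul_le_iff₀ (by positivity)]
    nlinarith)
  rw [Real.norm_eq_abs, Real.norm_of_nonneg (by positivity)]
  refine this.trans (le_of_eq ?_)
  rw [pow_mul, one_div, mul_inv, ← sq]

lemma lm_tendsto (k q : ℕ) :
    Tendsto (fun n : ℕ => (n : ℝ) ^ (k + 3) * dd (k + 3) (lm n) q) atTop
      (𝓝 ((k + 2).factorial * zetaNat (k + 2))) := by
  have h1 := sg_tendsto k q
  have h2 : Tendsto (fun n : ℕ => (n : ℝ) ^ (k + 3) *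
      dd (k + 2) (fun i => Real.log (1 - i * (1 / ((n : ℝ) * n)))) (q + 1)) atTop (𝓝 0) := by
    have h3 := (isBigO_refl (fun n : ℕ => (n : ℝ) ^ (k + 3)) atTop).mul (dd_logsq_bound (k + 1) (q + 1))
    refine h3.trans_tendsto ?_
    have h4 : Tendsto (fun n : ℕ => (n : ℝ)⁻¹ ^ (k + 1)) atTop (𝓝 0) := by
      have := (tendsto_inv_atTop_nhds_zero_nat (𝕜 := ℝ)).pow (k + 1)
      simpa using this
    refine h4.congr' ?_
    filter_upwards [eventually_gt_atTop 0] with n hn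
    have hn0 : (n : ℝ) ≠ 0 := by exact_mod_cast hn.ne'
    rw [show 2 * (k + 1 + 1) = (k + 3) + (k + 1) by ring, pow_add _ (k + 3) (k + 1), ← mul_assoc, ← mul_pow,
      mul_inv_cancel₀ hn0, one_pow, one_mul]
  have h3 := h1.add h2
  rw [add_zero] at h3
  refine h3.congr' ?_
  filter_upwards [eventually_gt_atTop (q + (k + 1) + 2)] with n hn
  rw [dd_lm (k + 1) q n hn]
  ring

/-- The basic small scale `n^(-3/4)`. -/
noncomputable def dl (n : ℕ) : ℝ := (n : ℝ)⁻¹ * (n : ℝ) ^ (1 / 4 : ℝ)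

lemma inv_isBigO_dl : (fun n : ℕ => (n : ℝ)⁻¹) =O[atTop] dl := by
  refine IsBigO.of_bound 1 ?_
  filter_upwards [eventually_ge_atTop 1] with n hn
  have hn1 : (1 : ℝ) ≤ n := by exact_mod_cast hn
  have h2 : (1 : ℝ) ≤ (n : ℝ) ^ (1 / 4 : ℝ) := Real.one_le_rpow hn1 (by norm_num)
  have h3 : (0 : ℝ) ≤ (n : ℝ)⁻¹ := by positivity
  rw [one_mul, dl, Real.norm_of_nonneg h3, Real.norm_of_nonneg (by positivity)]
  nlinarith

lemma dl_sq_tendsto : Tendsto (fun n : ℕ => (n : ℝ) * dl n ^ 2) atTop (𝓝 0) := by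
  have h : Tendsto (fun n : ℕ => (n : ℝ) ^ (-(1 / 2) : ℝ)) atTop (𝓝 0) :=
    (tendsto_rpow_neg_atTop (by norm_num : (0 : ℝ) < 1 / 2)).comp tendsto_natCast_atTop_atTop
  refine h.congr' ?_
  filter_upwards [eventually_gt_atTop 0] with n hn
  have hn0 : (0 : ℝ) < n := by exact_mod_cast hn
  rw [dl, mul_pow, ← Real.rpow_natCast ((n : ℝ) ^ (1 / 4 : ℝ)) 2, ← Real.rpow_mul hn0.le]
  have : (n : ℝ) * ((n : ℝ)⁻¹ ^ 2 * (n : ℝ) ^ ((1 / 4 : ℝ) * (2 : ℕ))) =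
    (n : ℝ) ^ (-1 : ℝ) * (n : ℝ) ^ ((1 / 4 : ℝ) * (2 : ℕ)) := by
    rw [Real.rpow_neg_one]
    field_simp
  rw [this, ← Real.rpow_add hn0]
  norm_num

lemma dl_tendsto : Tendsto dl atTop (𝓝 0) := by
  have h : Tendsto (fun n : ℕ => (n : ℝ) ^ (-(3 / 4) : ℝ)) atTop (𝓝 0) :=
    (tendsto_rpow_neg_atTop (by norm_num : (0 : ℝ) < 3 / 4)).comp tendsto_natCast_atTop_atTop
  refine h.congr' ?_
  filter_upwards [eventually_gt_atTop 0] with n hn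
  have hn0 : (0 : ℝ) < n := by exact_mod_cast hn
  rw [dl, ← Real.rpow_neg_one, ← Real.rpow_add hn0]
  norm_num

lemma lm_bigO (k q : ℕ) :
    (fun n : ℕ => dd (k + 2) (lm n) q) =O[atTop] (fun n : ℕ => (n : ℝ)⁻¹ ^ k * ((n : ℝ)⁻¹ * dl n)) := by
  cases k with
  | zero =>
    have h1 : (fun n : ℕ => dd 2 (sg n) q +
      dd 1 (fun i => Real.log (1 - i * (1 / ((n : ℝ) * n)))) (q + 1)) =O[atTop]
        (fun n : ℕ => (n : ℝ)⁻¹ * dl n) := by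
      refine IsBigO.add ?_ ?_
      · refine (sg_two q).congr_right fun n => ?_
        rw [dl]; ring
      · refine (dd_logsq_bound 0 (q + 1)).trans ?_
        refine (((isBigO_refl (fun n : ℕ => (n : ℝ)⁻¹) atTop).mul inv_isBigO_dl)).congr_left fun n => ?_
        ring
    refine IsBigO.congr' h1 ?_ ?_
    · filter_upwards [eventually_gt_atTop (q + 0 + 2)] with n hn
      rw [dd_lm 0 q n hn]
    · filter_upwards with n
      simp
  | succ k =>
    have h1 := (lm_tendsto k q).isBigO_one ℝ
    have h2 := (isBigO_refl (fun n : ℕ => (n : ℝ)⁻¹ ^ (k + 3)) atTop).mul h1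
    have h3 : (fun n : ℕ => dd (k + 3) (lm n) q) =O[atTop] (fun n : ℕ => (n : ℝ)⁻¹ ^ (k + 3)) := by
      refine h2.congr' ?_ ?_
      · filter_upwards [eventually_gt_atTop 0] with n hn
        have hn0 : (n : ℝ) ≠ 0 := by exact_mod_cast hn.ne'
        rw [← mul_assoc, ← mul_pow, inv_mul_cancel₀ hn0, one_pow, one_mul]
      · filter_upwards with n
        simp
    refine h3.trans ?_
    refine (((isBigO_refl (fun n : ℕ => (n : ℝ)⁻¹ ^ (k + 2)) atTop).mul inv_isBigO_dl)).congr ?_ ?_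
    · intro n; ring
    · intro n; ring

lemma gamma_step (n j : ℕ) (hn : 2 ≤ n) :
    Real.log (Real.Gamma (1 + j)) - Real.log (Real.Gamma (1 - 1 / (n : ℝ) + j))
      ≤ Real.log (j + 1) / n := by
  have hn0 : (0 : ℝ) < n := by exact_mod_cast (by omega : 0 < n)
  have hn2 : 1 / (n : ℝ) < 1 := by
    rw [div_lt_one hn0]; exact_mod_cast (by omega : 1 < n)
  have hn3 : 0 < 1 / (n : ℝ) := by positivity
  have hj : (0 : ℝ) ≤ j := by positivity
  have h := Real.convexOn_log_Gamma.slope_mono_adjacent (x := 1 - 1 / (n : ℝ) + j) (y := 1 + j)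
    (z := 1 + j + 1) (by simp only [Set.mem_Ioi]; linarith) (by simp only [Set.mem_Ioi]; linarith)
    (by linarith) (by linarith)
  simp only [Function.comp_apply] at h
  have hp : (0 : ℝ) < 1 + j := by linarith
  rw [Real.Gamma_add_one hp.ne', Real.log_mul hp.ne' (Real.Gamma_pos_of_pos hp).ne',
    show (1 + (j : ℝ)) + 1 - (1 + j) = 1 by ring,
    show (1 + (j : ℝ)) - (1 - 1 / (n : ℝ) + j) = 1 / n by ring, div_one, div_le_iff₀ hn3] at h
  rw [add_comm (j : ℝ) 1]
  calc _ ≤ _ := h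
    _ = _ := by ring

lemma gamma_step' (n j : ℕ) (hn : 2 ≤ n) :
    Real.log (j + 1) / n ≤
    Real.log (Real.Gamma (1 + (j + 1 : ℕ))) - Real.log (Real.Gamma (1 - 1 / (n : ℝ) + (j + 1 : ℕ))) := by
  have hn0 : (0 : ℝ) < n := by exact_mod_cast (by omega : 0 < n)
  have hn2 : 1 / (n : ℝ) < 1 := by
    rw [div_lt_one hn0]; exact_mod_cast (by omega : 1 < n)
  have hn3 : 0 < 1 / (n : ℝ) := by positivity
  have hj : (0 : ℝ) ≤ j := by positivity
  push_cast
  have h := Real.convexOn_log_Gamma.slope_mono_adjacent (x := (j : ℝ) + 1)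
    (y := 1 - 1 / (n : ℝ) + (j + 1))
    (z := (j : ℝ) + 1 + 1) (by simp only [Set.mem_Ioi]; linarith) (by simp only [Set.mem_Ioi]; linarith)
    (by linarith) (by linarith)
  simp only [Function.comp_apply] at h
  have hp : (0 : ℝ) < j + 1 := by linarith
  rw [Real.Gamma_add_one hp.ne', Real.log_mul hp.ne' (Real.Gamma_pos_of_pos hp).ne',
    show (j : ℝ) + 1 + 1 - (1 - 1 / (n : ℝ) + (j + 1)) = 1 / n by ring,
    show (1 - 1 / (n : ℝ) + (j + 1)) - (j + 1) = 1 - 1 / n by ring,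
    div_le_div_iff₀ (by linarith) hn3] at h
  rw [show 1 + ((j : ℝ) + 1) = j + 1 + 1 by ring, Real.Gamma_add_one hp.ne',
    Real.log_mul hp.ne' (Real.Gamma_pos_of_pos hp).ne']
  rw [div_eq_mul_one_div]
  nlinarith

lemma sum_log_fact (n : ℕ) : ∑ j ∈ range n, Real.log ((j : ℝ) + 1) = Real.log n.factorial := by
  induction n with
  | zero => simp
  | succ n ih =>
    rw [sum_range_succ, ih, Nat.factorial_succ, Nat.cast_mul, Real.log_mul (by positivity)
      (by positivity)]
    push_cast
    ring

lemma log_div_tendsto : Tendsto (fun n : ℕ => Real.log n / n) atTop (𝓝 0) := by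
  have := Real.isLittleO_log_id_atTop.tendsto_div_nhds_zero
  exact this.comp tendsto_natCast_atTop_atTop

lemma stirling_tendsto :
    Tendsto (fun n : ℕ => Real.log n - Real.log n.factorial / n) atTop (𝓝 1) := by
  have h1 : Tendsto (fun n : ℕ => Real.log (Stirling.stirlingSeq n)) atTop (𝓝 (Real.log √Real.pi)) :=
    (Stirling.tendsto_stirlingSeq_sqrt_pi).log (by positivity)
  have hinv := tendsto_inv_atTop_nhds_zero_nat (𝕜 := ℝ)
  have h2 := h1.mul hinv
  have h3 := log_div_tendsto.mul_const (1 / 2)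
  have h4 := hinv.const_mul (1 / 2 * Real.log 2)
  have h5 := ((h2.add h3).add h4).const_sub 1
  simp only [mul_zero, zero_mul, add_zero, sub_zero] at h5
  refine h5.congr' ?_
  filter_upwards [eventually_gt_atTop 0] with n hn
  have hn0 : (0 : ℝ) < n := by exact_mod_cast hn
  rw [Stirling.log_stirlingSeq_formula, Real.log_mul (by norm_num) hn0.ne',
    Real.log_div hn0.ne' (Real.exp_pos 1).ne', Real.log_exp]
  field_simp
  ring

lemma sg_diff_le (n : ℕ) (hn : 2 ≤ n) : sg n 0 - sg n 1 ≤ Real.log n.factorial / n := by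
  unfold sg
  rw [← sum_sub_distrib, ← sum_log_fact, sum_div]
  refine sum_le_sum fun j _ => ?_
  have := gamma_step n j hn
  simpa using this

lemma sg_diff_ge (n : ℕ) (hn : 2 ≤ n) :
    Real.log n.factorial / n - Real.log n / n - Real.log (Real.Gamma (1 - 1 / (n : ℝ)))
      ≤ sg n 0 - sg n 1 := by
  obtain ⟨m, rfl⟩ : ∃ m, n = m + 1 := ⟨n - 1, by omega⟩
  unfold sg
  rw [← sum_sub_distrib, ← sum_log_fact, sum_div, sum_range_succ, sum_range_succ']
  have : ∑ j ∈ range m, Real.log ((j : ℝ) + 1) / ((m + 1 : ℕ) : ℝ) ≤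
    ∑ j ∈ range m, (Real.log (Real.Gamma (1 - ((0 : ℕ) : ℝ) / ((m + 1 : ℕ) : ℝ) + ((j + 1 : ℕ) : ℝ)))
      - Real.log (Real.Gamma (1 - ((1 : ℕ) : ℝ) / ((m + 1 : ℕ) : ℝ) + ((j + 1 : ℕ) : ℝ)))) := by
    refine sum_le_sum fun j _ => ?_
    have := gamma_step' (m + 1) j hn
    simpa using this
  have h2 : Real.log (Real.Gamma (1 - ((0 : ℕ) : ℝ) / ((m + 1 : ℕ) : ℝ) + ((0 : ℕ) : ℝ)))
      - Real.log (Real.Gamma (1 - ((1 : ℕ) : ℝ) / ((m + 1 : ℕ) : ℝ) + ((0 : ℕ) : ℝ)))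
      = - Real.log (Real.Gamma (1 - 1 / ((m + 1 : ℕ) : ℝ))) := by
    simp
  rw [h2]
  have h3 : Real.log ((m : ℝ) + 1) = Real.log ((m + 1 : ℕ) : ℝ) := by push_cast; rfl
  rw [h3]
  linarith

lemma lm_one_tendsto : Tendsto (fun n : ℕ => lm n 1) atTop (𝓝 1) := by
  have hinv := tendsto_inv_atTop_nhds_zero_nat (𝕜 := ℝ)
  have hG : Tendsto (fun n : ℕ => Real.log (Real.Gamma (1 - 1 / (n : ℝ)))) atTop (𝓝 0) := by
    have hc : ContinuousAt Real.Gamma 1 :=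
      (Real.differentiableAt_Gamma (fun m => by
        have : (0 : ℝ) ≤ m := by positivity
        linarith)).continuousAt
    have h1 : Tendsto (fun n : ℕ => 1 - 1 / (n : ℝ)) atTop (𝓝 1) := by
      simpa using hinv.const_sub 1
    have h2 := (hc.tendsto.comp h1)
    rw [Real.Gamma_one] at h2
    simpa using h2.log one_ne_zero
  have hS : Tendsto (fun n : ℕ => Real.log (1 - (n : ℝ)⁻¹ * (n : ℝ)⁻¹)) atTop (𝓝 0) := by
    have := (hinv.mul hinv).const_sub 1
    rw [mul_zero, sub_zero] at this
    simpa using this.log one_ne_zero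
  have hlo := stirling_tendsto.add hS
  have hhi := (hlo.add log_div_tendsto).add hG
  simp only [add_zero] at hlo hhi
  have heq : ∀ n : ℕ, 2 ≤ n → lm n 1 = Real.log n + Real.log (1 - (n : ℝ)⁻¹ * (n : ℝ)⁻¹)
      - (sg n 0 - sg n 1) := by
    intro n hn
    have hn0 : (0 : ℝ) < n := by exact_mod_cast (by omega : 0 < n)
    have hp := sq_sub_pos n 1 (by omega)
    rw [lm_formula n 1 (by omega)]
    have hg : (n : ℝ) * n = ((n : ℝ) * n - (1 : ℕ)) + 1 := by push_cast; ring
    have h1 : Real.log (Real.Gamma ((n : ℝ) * n)) = Real.log ((n : ℝ) * n - (1 : ℕ))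
        + Real.log (Real.Gamma ((n : ℝ) * n - (1 : ℕ))) := by
      rw [← Real.log_mul hp.ne' (Real.Gamma_pos_of_pos hp).ne', ← Real.Gamma_add_one hp.ne', ← hg]
    have hf : (n : ℝ) * n - (1 : ℕ) = ((n : ℝ) * n) * (1 - (n : ℝ)⁻¹ * (n : ℝ)⁻¹) := by
      field_simp
      push_cast; ring
    have hp2 : 0 < 1 - (n : ℝ)⁻¹ * (n : ℝ)⁻¹ := by
      rw [hf] at hp
      exact pos_of_mul_pos_right hp (by positivity)
    have h2 : Real.log ((n : ℝ) * n - (1 : ℕ)) = Real.log n + Real.log n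
        + Real.log (1 - (n : ℝ)⁻¹ * (n : ℝ)⁻¹) := by
      rw [hf, Real.log_mul (by positivity) hp2.ne', Real.log_mul hn0.ne' hn0.ne']
    rw [h1, h2]
    push_cast
    ring
  refine tendsto_of_tendsto_of_tendsto_of_le_of_le' hlo hhi ?_ ?_
  · filter_upwards [eventually_ge_atTop 2] with n hn
    rw [heq n hn]
    linarith [sg_diff_le n hn]
  · filter_upwards [eventually_ge_atTop 2] with n hn
    rw [heq n hn]
    linarith [sg_diff_ge n hn]

/-- Families whose `k`-th differences are of size `n^(-k) * c n` for `k ≤ K`. -/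
def Gd (K : ℕ) (c : ℕ → ℝ) (F : ℕ → ℕ → ℝ) : Prop :=
  ∀ k ≤ K, ∀ q, (fun n => dd k (F n) q) =O[atTop] (fun n : ℕ => (n : ℝ)⁻¹ ^ k * c n)

lemma Gd.mono {K K' : ℕ} {c : ℕ → ℝ} {F : ℕ → ℕ → ℝ} (h : Gd K c F) (hK : K' ≤ K) : Gd K' c F :=
  fun k hk q => h k (hk.trans hK) q

lemma Gd.weaken {K : ℕ} {c d : ℕ → ℝ} {F : ℕ → ℕ → ℝ} (h : Gd K c F) (hc : c =O[atTop] d) :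
    Gd K d F :=
  fun k hk q => (h k hk q).trans ((isBigO_refl _ _).mul hc)

lemma Gd.shift {K : ℕ} {c : ℕ → ℝ} {F : ℕ → ℕ → ℝ} (h : Gd K c F) :
    Gd K c (fun n i => F n (i + 1)) := by
  intro k hk q
  simp only [dd_shift]
  exact h k hk (q + 1)

lemma Gd.diff {K : ℕ} {c : ℕ → ℝ} {F : ℕ → ℕ → ℝ} (h : Gd (K + 1) c F) :
    Gd K (fun n => (n : ℝ)⁻¹ * c n) (fun n => dd 1 (F n)) := by
  intro k hk q
  have := h (k + 1) (by omega) q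
  refine this.congr (fun n => dd_add' k 1 _ _) (fun n => by ring)

lemma Gd.add {K : ℕ} {c : ℕ → ℝ} {F G : ℕ → ℕ → ℝ} (h : Gd K c F) (h2 : Gd K c G) :
    Gd K c (fun n i => F n i + G n i) := by
  intro k hk q
  simp only [dd_fadd]
  exact (h k hk q).add (h2 k hk q)

lemma Gd.mul {K : ℕ} {c d : ℕ → ℝ} {F G : ℕ → ℕ → ℝ} (h : Gd K c F) (h2 : Gd K d G) :
    Gd K (fun n => c n * d n) (fun n i => F n i * G n i) := by
  suffices H : ∀ k, ∀ c d : ℕ → ℝ, ∀ F G : ℕ → ℕ → ℝ, Gd k c F → Gd k d G → ∀ q,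
      (fun n => dd k (fun i => F n i * G n i) q) =O[atTop]
        (fun n : ℕ => (n : ℝ)⁻¹ ^ k * (c n * d n)) by
    intro k hk q
    exact H k c d F G (h.mono hk) (h2.mono hk) q
  intro k
  induction k with
  | zero =>
    intro c d F G hF hG q
    have := (hF 0 le_rfl q).mul (hG 0 le_rfl q)
    simpa [dd] using this
  | succ k ih =>
    intro c d F G hF hG q
    have e : ∀ n, dd (k + 1) (fun i => F n i * G n i) q
        = dd k (fun i => dd 1 (F n) i * G n (i + 1)) q + dd k (fun i => F n i * dd 1 (G n) i) q := by
      intro n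
      rw [← dd_fadd, dd_add']
      congr 1
      funext i
      simp only [dd]
      ring
    have h1 := ih _ _ _ _ hF.diff (hG.mono (Nat.le_succ k)).shift q
    have h2 := ih _ _ _ _ (hF.mono (Nat.le_succ k)) hG.diff q
    have h3 := (h1.congr_right (g₂ := fun n : ℕ => (n : ℝ)⁻¹ ^ (k + 1) * (c n * d n))
      (fun n => by ring)).add (h2.congr_right (g₂ := fun n : ℕ => (n : ℝ)⁻¹ ^ (k + 1) * (c n * d n))
      (fun n => by ring))
    exact h3.congr_left (fun n => (e n).symm)

lemma Gd.pow {K : ℕ} {c : ℕ → ℝ} {F : ℕ → ℕ → ℝ} (h : Gd K c F) (m : ℕ) :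
    Gd K (fun n => c n ^ (m + 1)) (fun n i => F n i ^ (m + 1)) := by
  induction m with
  | zero => simpa using h
  | succ m ih =>
    have := ih.mul h
    simpa only [← pow_succ] using this

lemma dd_bigO (k : ℕ) (F : ℕ → ℕ → ℝ) (g : ℕ → ℝ)
    (h : ∀ q, (fun n => F n q) =O[atTop] g) (q : ℕ) : (fun n => dd k (F n) q) =O[atTop] g := by
  induction k generalizing q with
  | zero => exact h q
  | succ k ih => exact (ih (q + 1)).sub (ih q)

lemma Gd.exp {K : ℕ} {c : ℕ → ℝ} {y : ℕ → ℕ → ℝ} (h : Gd K c y)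
    (hc : c =O[atTop] (fun n : ℕ => (n : ℝ)⁻¹)) :
    Gd K (fun n => c n ^ 2) (fun n i => Real.exp (y n i) - 1 - y n i) := by
  intro k hk q
  have hinv := tendsto_inv_atTop_nhds_zero_nat (𝕜 := ℝ)
  have hc0 : Tendsto c atTop (𝓝 0) := hc.trans_tendsto hinv
  have hc1 : c =O[atTop] (fun _ => (1 : ℝ)) := hc0.isBigO_one ℝ
  have hy : ∀ i, (fun n => y n i) =O[atTop] c := by
    intro i
    simpa [dd] using h 0 (by omega) i
  have hR : ∀ i, (fun n => Real.exp (y n i) - ∑ m ∈ range (k + 2), y n i ^ m / m.factorial)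
      =O[atTop] (fun n : ℕ => (n : ℝ)⁻¹ ^ k * c n ^ 2) := by
    intro i
    have h1 : (fun n => Real.exp (y n i) - ∑ m ∈ range (k + 2), y n i ^ m / m.factorial)
      =O[atTop] (fun n => y n i ^ (k + 2)) := by
      refine IsBigO.of_bound (((k + 2).succ : ℝ) / ((k + 2).factorial * (k + 2 : ℕ))) ?_
      have hy0 : Tendsto (fun n => y n i) atTop (𝓝 0) := (hy i).trans_tendsto hc0
      have hy1 : ∀ᶠ n in atTop, |y n i| ≤ 1 := by
        have := hy0.abs
        rw [abs_zero] at this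
        exact (this.eventually (gt_mem_nhds one_pos)).mono fun n hn => le_of_lt hn
      filter_upwards [hy1] with n hn
      have := Real.exp_bound hn (by omega : 0 < k + 2)
      rw [Real.norm_eq_abs, norm_pow, Real.norm_eq_abs, mul_comm]
      exact this
    refine h1.trans (((hy i).pow (k + 2)).trans ?_)
    have := (hc.pow k).mul (isBigO_refl (fun n => c n ^ 2) atTop)
    refine this.congr_left fun n => ?_
    ring
  have hR' := dd_bigO k _ _ hR q
  have hm : ∀ m ∈ range k, (fun n => dd k (fun i => ((m + 2).factorial : ℝ)⁻¹ * y n i ^ (m + 2)) q)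
      =O[atTop] (fun n : ℕ => (n : ℝ)⁻¹ ^ k * c n ^ 2) := by
    intro m _
    simp only [dd_smul]
    refine IsBigO.const_mul_left ?_ _
    refine ((h.pow (m + 1)) k hk q).trans ((isBigO_refl _ _).mul ?_)
    have := (hc1.pow m).mul (isBigO_refl (fun n => c n ^ 2) atTop)
    refine this.congr (fun n => ?_) (fun n => ?_)
    · ring
    · simp
  have hS := (IsBigO.sum hm).add hR'
  refine hS.congr_left fun n => ?_
  rw [Finset.sum_apply, ← dd_sum, ← dd_fadd]
  congr 1
  funext i
  rw [sum_range_succ' _ (k + 1), sum_range_succ' _ k]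
  simp only [pow_zero, Nat.factorial_zero, zero_add, pow_one, Nat.factorial_one, Nat.cast_one, div_one]
  have : ∑ m ∈ range k, ((m + 2).factorial : ℝ)⁻¹ * y n i ^ (m + 2)
    = ∑ m ∈ range k, y n i ^ (m + 1 + 1) / (m + 1 + 1).factorial :=
    sum_congr rfl fun m _ => by rw [div_eq_inv_mul]
  rw [this]
  ring

/-- Ratio of consecutive moments. -/
noncomputable def rh (n i : ℕ) : ℝ := Real.exp (dd 1 (lm n) i)

/-- Relative increment of the ratio. -/
noncomputable def s1 (n i : ℕ) : ℝ := Real.exp (dd 2 (lm n) i) - 1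

/-- Scale of `s1`. -/
noncomputable def cc (n : ℕ) : ℝ := (n : ℝ)⁻¹ * dl n

lemma cc_inv : cc =O[atTop] (fun n : ℕ => (n : ℝ)⁻¹) := by
  have := (isBigO_refl (fun n : ℕ => (n : ℝ)⁻¹) atTop).mul (dl_tendsto.isBigO_one ℝ)
  exact this.congr (fun n => rfl) (fun n => mul_one _)

lemma cc_dl : cc =O[atTop] dl := cc_inv.trans inv_isBigO_dl

lemma cc_tendsto : Tendsto cc atTop (𝓝 0) := cc_dl.trans_tendsto dl_tendsto

lemma y_Gd (K : ℕ) : Gd K cc (fun n => dd 2 (lm n)) := by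
  intro k _ q
  exact (lm_bigO k q).congr_left fun n => dd_add' k 2 _ _

lemma E_Gd (K : ℕ) : Gd K (fun n => cc n ^ 2) (fun n i => Real.exp (dd 2 (lm n) i) - 1 - dd 2 (lm n) i) :=
  (y_Gd K).exp cc_inv

lemma s1_Gd (K : ℕ) : Gd K cc s1 := by
  have h2 : (fun n => cc n ^ 2) =O[atTop] cc := by
    have := (cc_tendsto.isBigO_one ℝ).mul (isBigO_refl cc atTop)
    exact this.congr (fun n => by ring) (fun n => by ring)
  have := ((E_Gd K).weaken h2).add (y_Gd K)
  intro k hk q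
  refine (this k hk q).congr_left fun n => ?_
  congr 1
  funext i
  rw [s1]; ring

lemma rh_diff (n : ℕ) : dd 1 (rh n) = fun i => rh n i * s1 n i := by
  funext i
  have : dd 2 (lm n) i = dd 1 (lm n) (i + 1) - dd 1 (lm n) i := rfl
  rw [dd_succ, dd_zero, dd_zero, s1, this, rh, rh, Real.exp_sub]
  have := (Real.exp_pos (dd 1 (lm n) i)).ne'
  field_simp

lemma s1_tendsto (q : ℕ) : Tendsto (fun n => s1 n q) atTop (𝓝 0) := by
  have := s1_Gd 0 0 le_rfl q
  simp only [dd, pow_zero, one_mul] at this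
  exact this.trans_tendsto cc_tendsto

lemma rh_tendsto (q : ℕ) : Tendsto (fun n => rh n q) atTop (𝓝 (Real.exp 1)) := by
  induction q with
  | zero =>
    have h := (Real.continuous_exp.tendsto 1).comp lm_one_tendsto
    refine h.congr' ?_
    filter_upwards [eventually_gt_atTop 0] with n hn
    have : lm n 0 = 0 := by rw [lm, mu0_zero n hn, Real.log_one]
    simp [rh, dd, this]
  | succ q ih =>
    have h := ih.add (ih.mul (s1_tendsto q))
    rw [mul_zero, add_zero] at h
    refine h.congr fun n => ?_
    have := congrFun (rh_diff n) q
    rw [dd_succ, dd_zero, dd_zero] at this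
    linarith

lemma rh_Gd (K : ℕ) : Gd K (fun _ => 1) rh := by
  induction K with
  | zero =>
    intro k hk q
    obtain rfl : k = 0 := by omega
    simpa [dd] using (rh_tendsto q).isBigO_one ℝ
  | succ K ih =>
    intro k hk q
    rcases Nat.lt_or_ge k (K + 1) with h | h
    · exact ih k (by omega) q
    · obtain rfl : k = K + 1 := by omega
      have h1 := (ih.mul (s1_Gd K)) K le_rfl q
      have h2 := h1.trans ((isBigO_refl (fun n : ℕ => (n : ℝ)⁻¹ ^ K) atTop).mul
        (cc_inv.congr_left (f₂ := fun n => 1 * cc n) fun n => by ring))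
      refine h2.congr (fun n => ?_) (fun n => by ring)
      rw [dd_add', rh_diff]

lemma rh_sub_Gd (K : ℕ) : Gd K dl (fun n i => rh n i - rh n 0) := by
  intro k hk q
  cases k with
  | zero =>
    simp only [dd, pow_zero, one_mul]
    induction q with
    | zero => simpa using isBigO_zero _ _
    | succ q ih =>
      have h1 := ((rh_Gd 0).mul (s1_Gd 0)) 0 le_rfl q
      simp only [dd, pow_zero, one_mul] at h1
      refine (ih.add (h1.trans cc_dl)).congr_left fun n => ?_
      have := congrFun (rh_diff n) q
      rw [dd_succ, dd_zero, dd_zero] at this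
      linarith
  | succ k =>
    have h1 := ((rh_Gd k).mul (s1_Gd k)) k le_rfl q
    refine h1.congr (fun n => ?_) (fun n => by simp only [cc]; ring)
    rw [dd_fsub, dd_const, sub_zero, dd_add', rh_diff]

lemma lam_bigO (s : ℕ) :
    (fun n => dd (s + 1) (rh n) 0) =O[atTop] (fun n : ℕ => (n : ℝ)⁻¹ ^ (s + 1) * dl n) := by
  have := rh_sub_Gd (s + 1) (s + 1) le_rfl 0
  refine this.congr_left fun n => ?_
  rw [dd_fsub, dd_const, sub_zero]

lemma pow_mul_inv_pow (n : ℕ) (hn : 0 < n) (a b : ℕ) :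
    (n : ℝ) ^ (a + b) * (n : ℝ)⁻¹ ^ a = (n : ℝ) ^ b := by
  have hn0 : (n : ℝ) ≠ 0 := by exact_mod_cast hn.ne'
  rw [pow_add, inv_pow]
  field_simp

lemma lam_tendsto (k : ℕ) :
    Tendsto (fun n : ℕ => (n : ℝ) ^ (k + 3) * dd (k + 2) (rh n) 0) atTop
      (𝓝 (Real.exp 1 * ((k + 2).factorial * zetaNat (k + 2)))) := by
  have hE : Tendsto (fun n : ℕ => (n : ℝ) ^ (k + 3) *
      dd (k + 1) (fun i => Real.exp (dd 2 (lm n) i) - 1 - dd 2 (lm n) i) 0) atTop (𝓝 0) := by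
    have h1 := (isBigO_refl (fun n : ℕ => (n : ℝ) ^ (k + 3)) atTop).mul (E_Gd (k + 1) (k + 1) le_rfl 0)
    refine h1.trans_tendsto ?_
    have h2 := dl_tendsto.pow 2
    rw [zero_pow two_ne_zero] at h2
    refine h2.congr' ?_
    filter_upwards [eventually_gt_atTop 0] with n hn
    have hn0 : (n : ℝ) ≠ 0 := by exact_mod_cast hn.ne'
    rw [← mul_assoc, show k + 3 = (k + 1) + 2 by ring, pow_mul_inv_pow n hn, cc]
    field_simp
  have hs : Tendsto (fun n : ℕ => (n : ℝ) ^ (k + 3) * dd (k + 1) (s1 n) 0) atTop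
      (𝓝 ((k + 2).factorial * zetaNat (k + 2))) := by
    have h := (lm_tendsto k 0).add hE
    rw [add_zero] at h
    refine h.congr fun n => ?_
    rw [← mul_add, show k + 3 = (k + 1) + 2 by ring, dd_add' (k + 1) 2, ← dd_fadd]
    congr 2
    funext i
    rw [s1]; ring
  have hP : Tendsto (fun n : ℕ => (n : ℝ) ^ (k + 3) *
      dd (k + 1) (fun i => (rh n i - rh n 0) * s1 n i) 0) atTop (𝓝 0) := by
    have h1 := (isBigO_refl (fun n : ℕ => (n : ℝ) ^ (k + 3)) atTop).mul
      (((rh_sub_Gd (k + 1)).mul (s1_Gd (k + 1))) (k + 1) le_rfl 0)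
    refine h1.trans_tendsto ?_
    refine dl_sq_tendsto.congr' ?_
    filter_upwards [eventually_gt_atTop 0] with n hn
    have hn0 : (n : ℝ) ≠ 0 := by exact_mod_cast hn.ne'
    rw [← mul_assoc, show k + 3 = (k + 1) + 2 by ring, pow_mul_inv_pow n hn, cc]
    field_simp
  have h := ((rh_tendsto 0).mul hs).add hP
  rw [add_zero] at h
  refine h.congr fun n => ?_
  have : dd (k + 2) (rh n) 0 = rh n 0 * dd (k + 1) (s1 n) 0
      + dd (k + 1) (fun i => (rh n i - rh n 0) * s1 n i) 0 := by
    rw [show k + 2 = (k + 1) + 1 from rfl, dd_add', rh_diff, ← dd_smul, ← dd_fadd]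
    congr 1
    funext i
    ring
  rw [this]
  ring

lemma mu0_succ (n i : ℕ) (hi : i + 1 < n) : mu0 (i + 1) n n = rh n i * mu0 i n n := by
  have h1 := mu0_pos n i (by omega)
  have h2 := mu0_pos n (i + 1) hi
  rw [rh, dd_succ, dd_zero, dd_zero, lm, lm, Real.exp_sub, Real.exp_log h1, Real.exp_log h2]
  field_simp

lemma mu0_tendsto (q : ℕ) : Tendsto (fun n => mu0 q n n) atTop (𝓝 (Real.exp 1 ^ q)) := by
  induction q with
  | zero =>
    rw [pow_zero]
    refine tendsto_const_nhds.congr' ?_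
    filter_upwards [eventually_gt_atTop 0] with n hn
    rw [mu0_zero n hn]
  | succ q ih =>
    have h := (rh_tendsto q).mul ih
    rw [← pow_succ'] at h
    refine h.congr' ?_
    filter_upwards [eventually_gt_atTop (q + 1)] with n hn
    rw [mu0_succ n q hn]

lemma dd_eq_fwdDiff_nat (k : ℕ) (f : ℕ → ℝ) (q : ℕ) : dd k f q = (fwdDiff (1 : ℕ))^[k] f q := by
  induction k generalizing q with
  | zero => rfl
  | succ k ih => rw [dd_succ, ih, ih, Function.iterate_succ_apply', fwdDiff]

lemma newton (f : ℕ → ℝ) (q : ℕ) :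
    f q = ∑ s ∈ range (q + 1), (q.choose s : ℝ) * dd s f 0 := by
  have := shift_eq_sum_fwdDiff_iter 1 f q 0
  simp only [zero_add, smul_eq_mul, mul_one, nsmul_eq_mul] at this
  rw [this]
  exact sum_congr rfl fun s _ => by rw [dd_eq_fwdDiff_nat]

/-- Exponential generating function. -/
noncomputable def egf (μ : ℕ → ℝ) : PowerSeries ℝ := PowerSeries.mk fun q => μ q / q.factorial

/-- Derivative of power series. -/
noncomputable def pd (f : PowerSeries ℝ) : PowerSeries ℝ := PowerSeries.derivative ℝ f

lemma coeff_pd (f : PowerSeries ℝ) (n : ℕ) :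
    PowerSeries.coeff n (pd f) = (n + 1) * PowerSeries.coeff (n + 1) f := by
  rw [pd, PowerSeries.coeff_derivative, mul_comm]

lemma pd_mul (f g : PowerSeries ℝ) : pd (f * g) = pd f * g + f * pd g := by
  simp only [pd, Derivation.leibniz, smul_eq_mul]
  ring

/-- Logarithmic-type derivatives `M^(s) / M`. -/
noncomputable def Bs (μ : ℕ → ℝ) (s : ℕ) : PowerSeries ℝ := pd^[s] (egf μ) * (egf μ)⁻¹

lemma coeff_iter (μ : ℕ → ℝ) (s r : ℕ) :
    PowerSeries.coeff r (pd^[s] (egf μ)) = μ (r + s) / r.factorial := by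
  induction s generalizing r with
  | zero => simp [egf]
  | succ s ih =>
    rw [Function.iterate_succ_apply', coeff_pd, ih, Nat.factorial_succ,
      show r + 1 + s = r + (s + 1) by ring]
    push_cast
    have : (r : ℝ) + 1 ≠ 0 := by positivity
    field_simp

lemma egf_inv (μ : ℕ → ℝ) (h0 : μ 0 = 1) : egf μ * (egf μ)⁻¹ = 1 := by
  apply PowerSeries.mul_inv_cancel
  simp [egf, ← PowerSeries.coeff_zero_eq_constantCoeff_apply, h0]

lemma Bs_zero (μ : ℕ → ℝ) (h0 : μ 0 = 1) : Bs μ 0 = 1 := egf_inv μ h0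

lemma Bs_mul (μ : ℕ → ℝ) (h0 : μ 0 = 1) (s : ℕ) : Bs μ s * egf μ = pd^[s] (egf μ) := by
  rw [Bs, mul_assoc, mul_comm _ (egf μ), egf_inv μ h0, mul_one]

lemma Bs_succ (μ : ℕ → ℝ) (h0 : μ 0 = 1) (s : ℕ) :
    Bs μ (s + 1) = pd (Bs μ s) + Bs μ s * Bs μ 1 := by
  have h1 : pd^[s + 1] (egf μ) = pd (Bs μ s) * egf μ + Bs μ s * pd (egf μ) := by
    rw [Function.iterate_succ_apply', ← Bs_mul μ h0 s, pd_mul]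
  rw [Bs, h1, add_mul, mul_assoc, egf_inv μ h0, mul_one, mul_assoc]
  rfl

lemma Bs_coeff_zero (μ : ℕ → ℝ) (h0 : μ 0 = 1) (s : ℕ) : PowerSeries.coeff 0 (Bs μ s) = μ s := by
  have h := congrArg (PowerSeries.coeff 0) (Bs_mul μ h0 s)
  rw [coeff_iter, PowerSeries.coeff_mul] at h
  simpa [h0, egf] using h

lemma cumulant_eq (μ : ℕ → ℝ) (h0 : μ 0 = 1) (p : ℕ) :
    cumulant μ (p + 1) = p.factorial * PowerSeries.coeff p (Bs μ 1) := by
  induction p using Nat.strong_induction_on with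
  | _ p ih =>
    cases p with
    | zero => rw [Bs_coeff_zero μ h0, cumulant]; simp
    | succ p =>
      rw [cumulant, sum_attach (range (p + 1))
        (fun l => (Nat.choose (p + 1) l : ℝ) * cumulant μ (l + 1) * μ (p + 1 - l))]
      have h := congrArg (PowerSeries.coeff (p + 1)) (Bs_mul μ h0 1)
      rw [coeff_iter, PowerSeries.coeff_mul, Nat.sum_antidiagonal_eq_sum_range_succ_mk,
        sum_range_succ] at h
      simp only [egf, PowerSeries.coeff_mk, Nat.sub_self, h0, Nat.factorial_zero, Nat.cast_one,
        div_one, mul_one] at h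
      have hf : ((p + 1).factorial : ℝ) ≠ 0 := by positivity
      rw [eq_div_iff hf, add_mul, sum_mul] at h
      have h2 : ∑ l ∈ range (p + 1), (Nat.choose (p + 1) l : ℝ) * cumulant μ (l + 1) * μ (p + 1 - l)
        = ∑ l ∈ range (p + 1), PowerSeries.coeff l (Bs μ 1) *
            (μ (p + 1 - l) / (p + 1 - l).factorial) * (p + 1).factorial := by
        refine sum_congr rfl fun l hl => ?_
        have hl' : l < p + 1 := mem_range.mp hl
        rw [ih l hl', ← Nat.choose_mul_factorial_mul_factorial (by omega : l ≤ p + 1)]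
        push_cast
        have hf2 : ((p + 1 - l).factorial : ℝ) ≠ 0 := by positivity
        field_simp
      rw [h2]
      have h3 : μ (p + 2) = μ (p + 1 + 1) := rfl
      rw [h3, ← h]
      ring

lemma Bs_rec (μ ρ : ℕ → ℝ) (h0 : μ 0 = 1) (p : ℕ) (hρ : ∀ q ≤ p, μ (q + 1) = ρ q * μ q) :
    PowerSeries.coeff p (Bs μ 1) = ∑ s ∈ range (p + 1),
      dd s ρ 0 / s.factorial * PowerSeries.coeff (p - s) (Bs μ s) := by
  have hdvd : (PowerSeries.X : PowerSeries ℝ) ^ (p + 1) ∣ pd^[1] (egf μ) -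
      ∑ s ∈ range (p + 1), PowerSeries.C (dd s ρ 0 / s.factorial) *
        (PowerSeries.X ^ s * pd^[s] (egf μ)) := by
    rw [PowerSeries.X_pow_dvd_iff]
    intro q hq
    rw [map_sub, coeff_iter, map_sum, hρ q (by omega), newton ρ q, sub_eq_zero, sum_mul, sum_div]
    simp only [PowerSeries.coeff_C_mul, PowerSeries.coeff_X_pow_mul', coeff_iter]
    rw [← sum_subset (range_mono (by omega : q + 1 ≤ p + 1))]
    · refine sum_congr rfl fun s hs => ?_
      have hs' : s ≤ q := by have := mem_range.mp hs; omega
      rw [if_pos hs', Nat.sub_add_cancel hs', ← Nat.choose_mul_factorial_mul_factorial hs']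
      push_cast
      have h1 : ((q - s).factorial : ℝ) ≠ 0 := by positivity
      have h2 : (q.choose s : ℝ) ≠ 0 := by exact_mod_cast (Nat.choose_pos hs').ne'
      field_simp
    · intro s _ hs
      have : ¬ s ≤ q := by have := mt mem_range.mpr hs; omega
      rw [if_neg this, mul_zero]
  have h2 := Dvd.dvd.mul_right hdvd (egf μ)⁻¹
  rw [PowerSeries.X_pow_dvd_iff] at h2
  have h3 := h2 p (by omega)
  rw [sub_mul, map_sub, sub_eq_zero, sum_mul, map_sum] at h3
  rw [Bs, h3]
  refine sum_congr rfl fun s hs => ?_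
  have hs' : s ≤ p := by have := mem_range.mp hs; omega
  rw [mul_assoc, PowerSeries.coeff_C_mul, mul_assoc, PowerSeries.coeff_X_pow_mul', if_pos hs', Bs]

/-- The moments. -/
noncomputable def mm (n : ℕ) : ℕ → ℝ := fun q => mu0 q n n

/-- Extra smallness factor for coefficients of positive order. -/
noncomputable def bd (r n : ℕ) : ℝ := if r = 0 then 1 else dl n

lemma bd_one (r : ℕ) : bd r =O[atTop] (fun _ => (1 : ℝ)) := by
  unfold bd
  split_ifs
  · exact isBigO_refl _ _
  · exact dl_tendsto.isBigO_one ℝ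

lemma dl_bd (r : ℕ) : dl =O[atTop] bd r := by
  unfold bd
  split_ifs
  · exact dl_tendsto.isBigO_one ℝ
  · exact isBigO_refl _ _

lemma bd_mul (i j : ℕ) : (fun n => bd i n * bd j n) =O[atTop] bd (i + j) := by
  rcases Nat.eq_zero_or_pos i with rfl | hi
  · have h1 : (fun n => bd 0 n * bd j n) = bd (0 + j) := by
      funext n
      have h2 : bd 0 n = 1 := by simp [bd]
      rw [h2, one_mul, zero_add]
    rw [h1]
  · have h1 : bd (i + j) = bd i := by
      funext n
      simp [bd, hi.ne', show i + j ≠ 0 by omega]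
    rw [h1]
    exact ((isBigO_refl (bd i) atTop).mul (bd_one j)).congr_right fun n => mul_one _

lemma Bs_bigO (p : ℕ) (h : ∀ i < p, (fun n => PowerSeries.coeff i (Bs (mm n) 1)) =O[atTop]
    (fun n : ℕ => (n : ℝ)⁻¹ ^ i * bd i n)) (s : ℕ) : ∀ r, r + s ≤ p →
    (fun n => PowerSeries.coeff r (Bs (mm n) s)) =O[atTop] (fun n : ℕ => (n : ℝ)⁻¹ ^ r * bd r n) := by
  have h0 : ∀ᶠ n in atTop, mm n 0 = 1 := by
    filter_upwards [eventually_gt_atTop 0] with n hn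
    exact mu0_zero n hn
  induction s with
  | zero =>
    intro r _
    rcases Nat.eq_zero_or_pos r with rfl | hr
    · refine (isBigO_refl (fun _ : ℕ => (1 : ℝ)) atTop).congr' ?_ ?_
      · filter_upwards [h0] with n hn
        rw [Bs_zero _ hn]; simp
      · filter_upwards with n
        simp [bd]
    · refine (isBigO_zero (fun n : ℕ => (n : ℝ)⁻¹ ^ r * bd r n) atTop).congr' ?_ EventuallyEq.rfl
      filter_upwards [h0] with n hn
      rw [Bs_zero _ hn, PowerSeries.coeff_one, if_neg hr.ne']
  | succ s ih =>
    intro r hr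
    have e : (fun n => ((r : ℝ) + 1) * PowerSeries.coeff (r + 1) (Bs (mm n) s) +
        ∑ x ∈ antidiagonal r, PowerSeries.coeff x.1 (Bs (mm n) s) * PowerSeries.coeff x.2 (Bs (mm n) 1))
        =ᶠ[atTop] (fun n => PowerSeries.coeff r (Bs (mm n) (s + 1))) := by
      filter_upwards [h0] with n hn
      rw [Bs_succ (mm n) hn s, map_add, coeff_pd, PowerSeries.coeff_mul]
    refine IsBigO.congr' ?_ e EventuallyEq.rfl
    refine IsBigO.add ?_ ?_
    · refine IsBigO.const_mul_left ?_ _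
      refine (ih (r + 1) (by omega)).trans ?_
      have h1 : (fun n : ℕ => (n : ℝ)⁻¹ * bd (r + 1) n) =O[atTop] bd r := by
        have h2 : (fun n : ℕ => (n : ℝ)⁻¹) =O[atTop] (fun _ => (1 : ℝ)) :=
          (tendsto_inv_atTop_nhds_zero_nat (𝕜 := ℝ)).isBigO_one ℝ
        have h3 : bd (r + 1) =O[atTop] bd r := by
          have : bd (r + 1) = dl := by funext n; simp [bd]
          rw [this]
          exact dl_bd r
        exact (h2.mul h3).congr_right fun n => one_mul _
      refine ((isBigO_refl (fun n : ℕ => (n : ℝ)⁻¹ ^ r) atTop).mul h1).congr_left fun n => ?_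
      ring
    · refine IsBigO.fun_sum fun x hx => ?_
      have hx' : x.1 + x.2 = r := mem_antidiagonal.mp hx
      have h1 := (ih x.1 (by omega)).mul (h x.2 (by omega))
      refine h1.trans ?_
      have h2 := bd_mul x.1 x.2
      rw [hx'] at h2
      refine ((isBigO_refl (fun n : ℕ => (n : ℝ)⁻¹ ^ r) atTop).mul h2).congr_left fun n => ?_
      rw [← hx', pow_add]
      ring

lemma Bs_rec_ev (p : ℕ) : ∀ᶠ n in atTop, PowerSeries.coeff p (Bs (mm n) 1) =
    ∑ s ∈ range (p + 1), dd s (rh n) 0 / s.factorial * PowerSeries.coeff (p - s) (Bs (mm n) s) := by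
  filter_upwards [eventually_gt_atTop (p + 1)] with n hn
  exact Bs_rec _ _ (mu0_zero n (by omega)) p fun q hq => mu0_succ n q (by omega)

lemma Bs_zero_ev (p : ℕ) (hp : 0 < p) : ∀ᶠ n in atTop,
    dd 0 (rh n) 0 / (Nat.factorial 0 : ℝ) * PowerSeries.coeff (p - 0) (Bs (mm n) 0) = 0 := by
  filter_upwards [eventually_gt_atTop 0] with n hn
  rw [Bs_zero _ (mu0_zero n hn), PowerSeries.coeff_one, if_neg (by omega), mul_zero]

lemma B1_bigO (p : ℕ) : (fun n => PowerSeries.coeff p (Bs (mm n) 1)) =O[atTop]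
    (fun n : ℕ => (n : ℝ)⁻¹ ^ p * bd p n) := by
  induction p using Nat.strong_induction_on with
  | _ p ih =>
    rcases Nat.eq_zero_or_pos p with rfl | hp
    · refine ((mu0_tendsto 1).isBigO_one ℝ).congr' ?_ ?_
      · filter_upwards [eventually_gt_atTop 0] with n hn
        rw [Bs_coeff_zero _ (mu0_zero n hn)]
        rfl
      · filter_upwards with n
        simp [bd]
    · refine IsBigO.congr' ?_ (EventuallyEq.symm (Bs_rec_ev p)) EventuallyEq.rfl
      refine IsBigO.fun_sum fun s hs => ?_
      have hs' : s ≤ p := by have := mem_range.mp hs; omega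
      rcases Nat.eq_zero_or_pos s with rfl | hs0
      · exact (isBigO_zero (fun n : ℕ => (n : ℝ)⁻¹ ^ p * bd p n) atTop).congr'
          (EventuallyEq.symm (Bs_zero_ev p hp)) EventuallyEq.rfl
      · obtain ⟨s, rfl⟩ : ∃ t, s = t + 1 := ⟨s - 1, by omega⟩
        have h1 := (lam_bigO s).const_mul_left (((s + 1).factorial : ℝ)⁻¹)
        have h2 := Bs_bigO p ih (s + 1) (p - (s + 1)) (by omega)
        have h3 := h2.trans ((isBigO_refl _ _).mul (bd_one _))
        refine ((h1.mul h3).congr ?_ ?_)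
        · intro n
          rw [div_eq_inv_mul]
        · intro n
          have : bd p n = dl n := by simp [bd, hp.ne']
          rw [this]
          have h6 : (n : ℝ)⁻¹ ^ p = (n : ℝ)⁻¹ ^ (s + 1) * (n : ℝ)⁻¹ ^ (p - (s + 1)) := by
            rw [← pow_add]
            congr 1
            omega
          rw [h6]
          ring

lemma B1_tendsto (k : ℕ) :
    Tendsto (fun n : ℕ => (n : ℝ) ^ (k + 3) * PowerSeries.coeff (k + 2) (Bs (mm n) 1)) atTop
      (𝓝 (Real.exp 1 ^ (k + 3) * zetaNat (k + 2))) := by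
  have hlast : Tendsto (fun n : ℕ => (n : ℝ) ^ (k + 3) * (dd (k + 2) (rh n) 0 /
      (k + 2).factorial * PowerSeries.coeff (k + 2 - (k + 2)) (Bs (mm n) (k + 2)))) atTop
      (𝓝 (Real.exp 1 ^ (k + 3) * zetaNat (k + 2))) := by
    have h1 := ((lam_tendsto k).mul (mu0_tendsto (k + 2))).div_const ((k + 2).factorial : ℝ)
    have hf : ((k + 2).factorial : ℝ) ≠ 0 := by positivity
    have h2 : Real.exp 1 * ((k + 2).factorial * zetaNat (k + 2)) * Real.exp 1 ^ (k + 2) /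
        (k + 2).factorial = Real.exp 1 ^ (k + 3) * zetaNat (k + 2) := by
      field_simp
      ring
    rw [h2] at h1
    refine h1.congr' ?_
    filter_upwards [eventually_gt_atTop 0] with n hn
    rw [Nat.sub_self, Bs_coeff_zero _ (mu0_zero n hn), mm]
    ring
  have hrest : ∀ s ∈ range (k + 2), Tendsto (fun n : ℕ => (n : ℝ) ^ (k + 3) * (dd s (rh n) 0 /
      s.factorial * PowerSeries.coeff (k + 2 - s) (Bs (mm n) s))) atTop (𝓝 0) := by
    intro s hs
    have hs' : s < k + 2 := mem_range.mp hs
    rcases Nat.eq_zero_or_pos s with rfl | hs0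
    · refine tendsto_const_nhds.congr' ?_
      filter_upwards [Bs_zero_ev (k + 2) (by omega)] with n hn
      rw [hn, mul_zero]
    · obtain ⟨s, rfl⟩ : ∃ t, s = t + 1 := ⟨s - 1, by omega⟩
      have h1 := (lam_bigO s).const_mul_left (((s + 1).factorial : ℝ)⁻¹)
      have h2 := Bs_bigO (k + 2) (fun i _ => B1_bigO i) (s + 1) (k + 2 - (s + 1)) (by omega)
      have h3 := (isBigO_refl (fun n : ℕ => (n : ℝ) ^ (k + 3)) atTop).mul (h1.mul h2)
      have h7 : Tendsto (fun n : ℕ => (n : ℝ) ^ (k + 3) *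
        ((n : ℝ)⁻¹ ^ (s + 1) * dl n * ((n : ℝ)⁻¹ ^ (k + 2 - (s + 1)) * bd (k + 2 - (s + 1)) n))) atTop (𝓝 0) := by
          refine dl_sq_tendsto.congr' ?_
          filter_upwards [eventually_gt_atTop 0] with n hn
          have : bd (k + 2 - (s + 1)) n = dl n := by simp [bd]; omega
          rw [this]
          have h5 := pow_mul_inv_pow n hn (k + 2) 1
          have h6 : (n : ℝ)⁻¹ ^ (k + 2) = (n : ℝ)⁻¹ ^ (s + 1) * (n : ℝ)⁻¹ ^ (k + 2 - (s + 1)) := by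
            rw [← pow_add]
            congr 1
            omega
          rw [h6, pow_one] at h5
          calc (n : ℝ) * dl n ^ 2 = ((n : ℝ) ^ (k + 2 + 1) *
              ((n : ℝ)⁻¹ ^ (s + 1) * (n : ℝ)⁻¹ ^ (k + 2 - (s + 1)))) * dl n ^ 2 := by rw [h5]
            _ = _ := by ring
      have h4 := h3.trans_tendsto h7
      refine h4.congr fun n => ?_
      rw [div_eq_inv_mul]
  have h := (tendsto_finsetSum _ hrest).add hlast
  rw [sum_const_zero, zero_add] at h
  refine h.congr' ?_
  filter_upwards [Bs_rec_ev (k + 2)] with n hn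
  rw [hn, sum_range_succ _ (k + 2), mul_add, mul_sum]


/-- for the square case `m = n` (`c = 1`), the `p`-th cumulant (`p ≥ 3`) of
the GLRT statistic under `H₀` satisfies `n^p · κ(p,n) → e^p (p−1)! ζ(p−1)` as `n → ∞`. -/
theorem cumulant_tendsto_square_case (p : ℕ) (hp : 3 ≤ p) :
    Tendsto (fun n : ℕ => (n : ℝ) ^ p * cumulant (fun q => mu0 q n n) p) atTop
      (𝓝 (Real.exp 1 ^ p * (Nat.factorial (p - 1) : ℝ) * zetaNat (p - 1))) := by
  obtain ⟨k, rfl⟩ : ∃ k, p = k + 3 := ⟨p - 3, by omega⟩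
  have h := (B1_tendsto k).const_mul ((k + 2).factorial : ℝ)
  have e : k + 3 - 1 = k + 2 := rfl
  rw [e, show Real.exp 1 ^ (k + 3) * ((k + 2).factorial : ℝ) * zetaNat (k + 2)
    = ((k + 2).factorial : ℝ) * (Real.exp 1 ^ (k + 3) * zetaNat (k + 2)) by ring]
  refine h.congr' ?_
  filter_upwards [eventually_gt_atTop 0] with n hn
  have h1 := cumulant_eq (mm n) (mu0_zero n hn) (k + 2)
  have h2 : cumulant (fun q => mu0 q n n) (k + 3) = cumulant (mm n) (k + 2 + 1) := rfl
  rw [h2, h1]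
  ring
end

section
/- Fix positive integers a < b with c = a/b ∈ (0,1), and fix reals 0 < N0 ≤ Y. Then there exist a constant C > 0 and a positive integer T such that for all integers t ≥ T, with n = a·t and m = b·t, and for every vector y = (y_1,…,y_n) of reals with N0 ≤ y_1 ≤ … ≤ y_n ≤ Y, |μ1(1,n,m,y) − e·(1−c)^{(1−c)/c}·Ψ1(y)·Ψ2(y)| ≤ C/n². -/
open Finset

/-- Exact `p`-th moment of the GLRT statistic under `H₁`, in terms of the covariance
eigenvalues `y`. -/
noncomputable def mu1 (p n m : ℕ) (y : Fin n → ℝ) : ℝ :=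
  (Nat.factorial p : ℝ) / (n : ℝ) ^ p *
    (∏ i, y i ^ (-(p : ℝ) / n)) *
    (∏ j ∈ Finset.range n,
      Real.Gamma ((m : ℝ) - n + 1 - p / n + j) / Real.Gamma ((m : ℝ) - n + 1 + j)) *
    ∑ k ∈ Finset.Nat.antidiagonalTuple n p,
      ∏ i, Real.Gamma ((m : ℝ) - p / n + k i) * y i ^ (k i)
        / (Real.Gamma ((k i : ℝ) + 1) * Real.Gamma ((m : ℝ) - p / n))

/-- `Ψ₁(y) = ∏ y_i^{-1/n}`. -/
noncomputable def Psi1 {n : ℕ} (y : Fin n → ℝ) : ℝ := ∏ i, y i ^ (-(1 : ℝ) / n)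

/-- `Ψ_{ℓ+1}(y) = (1/n) Σ y_i^ℓ` for `ℓ ≥ 1`. -/
noncomputable def PsiS {n : ℕ} (ℓ : ℕ) (y : Fin n → ℝ) : ℝ := (1 / (n : ℝ)) * ∑ i, y i ^ ℓ


/-- Sequences increasing from index one are bounded by their limit. -/
lemma aux_le_lim (u : ℕ → ℝ) (l : ℝ) (h : ∀ N, 1 ≤ N → u N ≤ u (N + 1))
    (hl : Filter.Tendsto u Filter.atTop (nhds l)) (N : ℕ) (hN : 1 ≤ N) : u N ≤ l := by
  have hm : Monotone (fun k => u (k + N)) := monotone_nat_of_le_succ (fun k => by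
    have := h (k + N) (by omega)
    rw [show k + 1 + N = k + N + 1 by ring]
    exact this)
  have := hm.ge_of_tendsto ((Filter.tendsto_add_atTop_iff_nat N).2 hl) 0
  simpa using this

/-- The digamma value at `N + 1`. -/
noncomputable def psiN (N : ℕ) : ℝ := (harmonic N : ℝ) - Real.eulerMascheroniConstant

lemma psiN_succ (N : ℕ) : psiN (N + 1) = psiN N + 1 / ((N : ℝ) + 1) := by
  unfold psiN
  rw [harmonic_succ]
  push_cast
  ring

lemma psiN_tendsto :
    Filter.Tendsto (fun N : ℕ => psiN N - Real.log N) Filter.atTop (nhds 0) := by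
  have := Real.tendsto_harmonic_sub_log.sub_const Real.eulerMascheroniConstant
  rw [sub_self] at this
  refine this.congr (fun N => ?_)
  unfold psiN
  ring

lemma log_trap_upper (x : ℝ) (hx : 0 < x) :
    Real.log (x + 1) - Real.log x ≤ 1 / (2 * x) + 1 / (2 * (x + 1)) := by
  rw [← Real.log_div (by positivity) (by positivity)]
  have h1 : 0 ≤ Real.log ((x + 1) / x) := Real.log_nonneg (by rw [le_div_iff₀ hx]; linarith)
  have h2 := Real.self_le_sinh_iff.2 h1
  rw [Real.sinh_log (by positivity)] at h2
  refine h2.trans (le_of_eq ?_)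
  field_simp
  ring

lemma log_trap_lower (x : ℝ) (hx : 0 < x) :
    2 / (2 * x + 1) ≤ Real.log (x + 1) - Real.log x := by
  rw [← Real.log_div (by positivity) (by positivity)]
  have h := Real.le_log_one_add_of_nonneg (x := 1 / x) (by positivity)
  rw [show (x + 1) / x = 1 + 1 / x by field_simp]
  refine le_trans (le_of_eq ?_) h
  field_simp
  ring

lemma psiN_upper (N : ℕ) (hN : 1 ≤ N) :
    psiN N ≤ Real.log N + 1 / (2 * N) := by
  have h := aux_le_lim (fun N : ℕ => psiN N - Real.log N - (1 / 2) * (1 / (N : ℝ))) (0 - (1 / 2) * 0) ?_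
    (psiN_tendsto.sub (tendsto_one_div_atTop_nhds_zero_nat.const_mul _)) N hN
  · have e : 1 / (2 * (N : ℝ)) = (1 / 2) * (1 / (N : ℝ)) := by ring
    linarith
  · intro N hN
    have hN' : (0 : ℝ) < N := by exact_mod_cast hN
    have := log_trap_upper N hN'
    rw [psiN_succ]
    push_cast
    have e1 : 1 / (2 * (N : ℝ)) = (1 / 2) * (1 / (N : ℝ)) := by ring
    have e2 : 1 / (2 * ((N : ℝ) + 1)) = (1 / 2) * (1 / ((N : ℝ) + 1)) := by
      rw [one_div_mul_one_div]
    linarith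

lemma psiN_lower (N : ℕ) (hN : 1 ≤ N) :
    Real.log N + 1 / (2 * N) - 1 / (N : ℝ) ^ 2 ≤ psiN N := by
  have h := aux_le_lim
    (fun N : ℕ => - (psiN N - Real.log N) + (1 / 2) * (1 / (N : ℝ)) - (1 / (N : ℝ)) * (1 / (N : ℝ)))
    (-0 + (1 / 2) * 0 - 0 * 0) ?_
    ((psiN_tendsto.neg.add (tendsto_one_div_atTop_nhds_zero_nat.const_mul _)).sub
      (tendsto_one_div_atTop_nhds_zero_nat.mul tendsto_one_div_atTop_nhds_zero_nat)) N hN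
  · have e : 1 / (2 * (N : ℝ)) = (1 / 2) * (1 / (N : ℝ)) := by ring
    have e' : 1 / (N : ℝ) ^ 2 = (1 / (N : ℝ)) * (1 / (N : ℝ)) := by ring
    linarith
  · intro N hN
    have hN' : (0 : ℝ) < N := by exact_mod_cast hN
    have := log_trap_lower N hN'
    rw [psiN_succ]
    push_cast
    set x : ℝ := (N : ℝ)
    have key : 0 ≤ 2 / (2 * x + 1) - (1 / 2) * (1 / x) - (1 / 2) * (1 / (x + 1))
        + (1 / x) * (1 / x) - (1 / (x + 1)) * (1 / (x + 1)) := by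
      have : 2 / (2 * x + 1) - (1 / 2) * (1 / x) - (1 / 2) * (1 / (x + 1))
        + (1 / x) * (1 / x) - (1 / (x + 1)) * (1 / (x + 1)) =
        (2 * (2 * x + 1) ^ 2 - x * (x + 1)) / (2 * x ^ 2 * (x + 1) ^ 2 * (2 * x + 1)) := by
        field_simp
        ring
      rw [this]
      apply div_nonneg
      · nlinarith
      · positivity
    linarith

/-- The second-order remainder of `log Γ` at `N + 1`. -/
noncomputable def remN (s : ℝ) (N : ℕ) : ℝ :=
  Real.log (Real.Gamma ((N : ℝ) + 1 - s)) - Real.log (Real.Gamma ((N : ℝ) + 1)) + s * psiN N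

lemma log_Gamma_add_one (x : ℝ) (hx : 0 < x) :
    Real.log (Real.Gamma (x + 1)) = Real.log x + Real.log (Real.Gamma x) := by
  rw [Real.Gamma_add_one hx.ne', Real.log_mul hx.ne' (Real.Gamma_pos_of_pos hx).ne']

lemma remN_nonneg (s : ℝ) (hs : 0 < s) (hs1 : s ≤ 1) (N : ℕ) (hN : 1 ≤ N) : 0 ≤ remN s N := by
  have hN' : (1 : ℝ) ≤ N := by exact_mod_cast hN
  have hd : HasDerivAt (Real.log ∘ Real.Gamma) (psiN N) ((N : ℝ) + 1) := by
    have h := (Real.hasDerivAt_Gamma_nat N).log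
      (Real.Gamma_pos_of_pos (by linarith)).ne'
    rw [Function.comp_def]
    convert h using 1
    rw [Real.Gamma_nat_eq_factorial, mul_div_cancel_left₀ _ (by positivity)]
    unfold psiN
    ring
  have h := Real.convexOn_log_Gamma.slope_le_of_hasDerivWithinAt_Iio (x := (N : ℝ) + 1 - s)
    (y := (N : ℝ) + 1)
    (Set.mem_Ioi.2 (by linarith)) (Set.mem_Ioi.2 (by linarith)) (by linarith) hd.hasDerivWithinAt
  rw [slope_def_field, div_le_iff₀ (by linarith)] at h
  simp only [Function.comp] at h
  unfold remN
  linarith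

lemma remN_upper_crude (s : ℝ) (hs : 0 < s) (hs1 : s ≤ 1) (N : ℕ) (hN : 1 ≤ N) :
    remN s N ≤ s * (psiN N - Real.log N) := by
  have hN' : (1 : ℝ) ≤ N := by exact_mod_cast hN
  have h := Real.convexOn_log_Gamma.2 (x := (N : ℝ)) (y := (N : ℝ) + 1)
    (Set.mem_Ioi.2 (by linarith)) (Set.mem_Ioi.2 (by linarith)) hs.le (sub_nonneg.2 hs1)
    (by ring)
  simp only [Function.comp, smul_eq_mul] at h
  rw [show s * (N : ℝ) + (1 - s) * ((N : ℝ) + 1) = (N : ℝ) + 1 - s by ring] at h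
  have h2 := log_Gamma_add_one N (by linarith)
  unfold remN
  rw [h2] at h ⊢
  nlinarith

lemma remN_tendsto (s : ℝ) (hs : 0 < s) (hs1 : s ≤ 1) :
    Filter.Tendsto (fun N : ℕ => remN s N) Filter.atTop (nhds 0) := by
  have h := psiN_tendsto.const_mul s
  rw [mul_zero] at h
  refine tendsto_of_tendsto_of_tendsto_of_le_of_le' tendsto_const_nhds h ?_ ?_
  · filter_upwards [Filter.eventually_ge_atTop 1] with N hN
    exact remN_nonneg s hs hs1 N hN
  · filter_upwards [Filter.eventually_ge_atTop 1] with N hN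
    exact remN_upper_crude s hs hs1 N hN

lemma remN_step (s : ℝ) (hs1 : s ≤ 1) (N : ℕ) (hN : 1 ≤ N) :
    remN s N - s ^ 2 * (1 / (N : ℝ)) ≤ remN s (N + 1) - s ^ 2 * (1 / ((N + 1 : ℕ) : ℝ)) := by
  have hN' : (1 : ℝ) ≤ N := by exact_mod_cast hN
  unfold remN
  rw [psiN_succ]
  push_cast
  set x : ℝ := (N : ℝ)
  have g1 := log_Gamma_add_one (x + 1) (by linarith)
  have g2 := log_Gamma_add_one (x + 1 - s) (by linarith)
  rw [show x + 1 - s + 1 = x + 1 + 1 - s by ring] at g2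
  rw [g1, g2]
  have hpos : 0 < x + 1 - s := by linarith
  have hl := Real.log_le_sub_one_of_pos (x := (x + 1) / (x + 1 - s)) (by positivity)
  rw [Real.log_div (by positivity) hpos.ne'] at hl
  have e : (x + 1) / (x + 1 - s) - 1 - s * (1 / (x + 1))
      = s ^ 2 * (1 / ((x + 1) * (x + 1 - s))) := by
    field_simp
    ring
  have e2 : 1 / ((x + 1) * (x + 1 - s)) ≤ 1 / ((x + 1) * x) :=
    one_div_le_one_div_of_le (by positivity) (by nlinarith)
  have e3 : 1 / x - 1 / (x + 1) = 1 / ((x + 1) * x) := by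
    field_simp
    ring
  have e4 := mul_le_mul_of_nonneg_left e2 (sq_nonneg s)
  rw [← e3] at e4
  linarith

lemma remN_upper (s : ℝ) (hs : 0 < s) (hs1 : s ≤ 1) (N : ℕ) (hN : 1 ≤ N) :
    remN s N ≤ s ^ 2 * (1 / (N : ℝ)) := by
  have h := aux_le_lim (fun N : ℕ => remN s N - s ^ 2 * (1 / (N : ℝ))) (0 - s ^ 2 * 0)
    (fun N hN => remN_step s hs1 N hN)
    ((remN_tendsto s hs hs1).sub (tendsto_one_div_atTop_nhds_zero_nat.const_mul _)) N hN
  linarith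

lemma sum_psiN (q n : ℕ) : ∑ j ∈ range n, psiN (q + j)
    = ((q + n : ℕ) : ℝ) * psiN (q + n) - q * psiN q - n := by
  induction n with
  | zero => simp
  | succ n ih =>
    rw [sum_range_succ, ih, ← add_assoc, psiN_succ]
    have : ((q : ℝ) + n + 1) ≠ 0 := by positivity
    push_cast
    field_simp
    ring

/-- The main exponential form of the deterministic factor. -/
lemma gamma_factor (q n : ℕ) (hq : 1 ≤ q) (hn : 1 ≤ n) :
    ∃ E : ℝ, |E| ≤ 3 * (1 / (n : ℝ)) * (1 / (q : ℝ)) ∧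
      (((q + n : ℕ) : ℝ) - 1 / n) * (∏ j ∈ range n,
        Real.Gamma ((((q + n : ℕ) : ℝ)) - n + 1 - 1 / n + j)
          / Real.Gamma ((((q + n : ℕ) : ℝ)) - n + 1 + j))
      = Real.exp (1 + ((q : ℝ) / n) * Real.log ((q : ℝ) / ((q + n : ℕ) : ℝ))) * Real.exp E := by
  have hq' : (1 : ℝ) ≤ q := by exact_mod_cast hq
  have hn' : (1 : ℝ) ≤ n := by exact_mod_cast hn
  have hm : ((q + n : ℕ) : ℝ) = q + n := by push_cast; ring
  set s : ℝ := 1 / (n : ℝ) with hs_def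
  have hs : 0 < s := by positivity
  have hs1 : s ≤ 1 := by rw [hs_def, div_le_one (by linarith)]; exact hn'
  have hsn : s * n = 1 := by rw [hs_def]; field_simp
  set m : ℝ := ((q + n : ℕ) : ℝ) with hm_def
  have hm2 : 2 ≤ m := by linarith
  set P := ∏ j ∈ range n, Real.Gamma (m - n + 1 - s + j) / Real.Gamma (m - n + 1 + j) with hP
  have hpos1 : ∀ j : ℕ, 0 < Real.Gamma (m - n + 1 - s + j) := fun j =>
    Real.Gamma_pos_of_pos (by have : (0 : ℝ) ≤ j := by positivity
                              linarith)
  have hpos2 : ∀ j : ℕ, 0 < Real.Gamma (m - n + 1 + j) := fun j =>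
    Real.Gamma_pos_of_pos (by have : (0 : ℝ) ≤ j := by positivity
                              linarith)
  have hPpos : 0 < P := prod_pos (fun j _ => div_pos (hpos1 j) (hpos2 j))
  have hlogP : Real.log P = ∑ j ∈ range n, (remN s (q + j) - s * psiN (q + j)) := by
    rw [hP, Real.log_prod (fun j _ => (div_pos (hpos1 j) (hpos2 j)).ne')]
    refine sum_congr rfl (fun j _ => ?_)
    rw [Real.log_div (hpos1 j).ne' (hpos2 j).ne']
    unfold remN
    have e1 : m - n + 1 - s + j = ((q + j : ℕ) : ℝ) + 1 - s := by push_cast; linarith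
    have e2 : m - n + 1 + j = ((q + j : ℕ) : ℝ) + 1 := by push_cast; linarith
    rw [e1, e2]
    ring
  rw [sum_sub_distrib, ← mul_sum, sum_psiN, ← hm_def] at hlogP
  set R := ∑ j ∈ range n, remN s (q + j) with hR
  have hR0 : 0 ≤ R := sum_nonneg (fun j _ => remN_nonneg s hs hs1 _ (by omega))
  have hR1 : R ≤ s * (1 / (q : ℝ)) := by
    have : R ≤ ∑ j ∈ range n, s ^ 2 * (1 / (q : ℝ)) := by
      refine sum_le_sum (fun j _ => (remN_upper s hs hs1 _ (by omega)).trans ?_)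
      refine mul_le_mul_of_nonneg_left (one_div_le_one_div_of_le (by linarith) ?_) (sq_nonneg s)
      push_cast
      have : (0 : ℝ) ≤ j := by positivity
      linarith
    rw [sum_const, card_range, nsmul_eq_mul] at this
    refine this.trans (le_of_eq ?_)
    calc (n : ℝ) * (s ^ 2 * (1 / (q : ℝ))) = (s * n) * (s * (1 / (q : ℝ))) := by ring
      _ = _ := by rw [hsn, one_mul]
  have hms : 0 < m - s := by linarith
  have hmpos : 0 < m := by linarith
  have hqpos : (0 : ℝ) < q := by linarith
  -- bounds for the digamma values
  have bnd : ∀ N : ℕ, 1 ≤ N → (N : ℝ) * Real.log N + 1 / 2 - 1 / (N : ℝ) ≤ N * psiN N ∧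
      N * psiN N ≤ (N : ℝ) * Real.log N + 1 / 2 := by
    intro N hN
    have hN' : (0 : ℝ) < N := by exact_mod_cast hN
    have h1 := mul_le_mul_of_nonneg_left (psiN_lower N hN) hN'.le
    have h2 := mul_le_mul_of_nonneg_left (psiN_upper N hN) hN'.le
    have e1 : (N : ℝ) * (Real.log N + 1 / (2 * N) - 1 / (N : ℝ) ^ 2)
      = (N : ℝ) * Real.log N + 1 / 2 - 1 / (N : ℝ) := by field_simp
    have e2 : (N : ℝ) * (Real.log N + 1 / (2 * N)) = (N : ℝ) * Real.log N + 1 / 2 := by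
      field_simp
    rw [e1] at h1
    rw [e2] at h2
    exact ⟨h1, h2⟩
  obtain ⟨bm1, bm2⟩ := bnd (q + n) (by omega)
  obtain ⟨bq1, bq2⟩ := bnd q hq
  rw [← hm_def] at bm1 bm2
  have hmq : 1 / m ≤ 1 / (q : ℝ) := one_div_le_one_div_of_le hqpos (by linarith)
  -- the logarithmic correction
  have l1 : Real.log (m - s) - Real.log m ≤ 0 := by
    have := Real.log_le_log hms (by linarith : m - s ≤ m)
    linarith
  have l2 : - (2 * s * (1 / (q : ℝ))) ≤ Real.log (m - s) - Real.log m := by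
    have h := Real.log_le_sub_one_of_pos (x := m / (m - s)) (by positivity)
    rw [Real.log_div hmpos.ne' hms.ne'] at h
    have e : m / (m - s) - 1 = s * (1 / (m - s)) := by field_simp; ring
    have h3 : 1 / (m - s) ≤ 2 * (1 / m) := by
      rw [← sub_nonneg]
      have : 2 * (1 / m) - 1 / (m - s) = (m - 2 * s) / (m * (m - s)) := by field_simp; ring
      rw [this]
      exact div_nonneg (by linarith) (by positivity)
    have h4 := mul_le_mul_of_nonneg_left h3 hs.le
    have h5 := mul_le_mul_of_nonneg_left hmq hs.le
    linarith
  have L : 1 + ((q : ℝ) / n) * Real.log ((q : ℝ) / m)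
      = Real.log m - s * (m * Real.log m - q * Real.log q - n) := by
    rw [Real.log_div hqpos.ne' hmpos.ne']
    have : (q : ℝ) / n = s * q := by rw [hs_def]; ring
    rw [this, show m * Real.log m = q * Real.log m + n * Real.log m by rw [hm]; ring]
    linear_combination (-Real.log m - (-1) - 2 + 2 * Real.log m) * hsn
  refine ⟨Real.log (m - s) + Real.log P - (1 + ((q : ℝ) / n) * Real.log ((q : ℝ) / m)), ?_, ?_⟩
  · rw [L, hlogP]
    have t1 := mul_le_mul_of_nonneg_left bm1 hs.le
    have t2 := mul_le_mul_of_nonneg_left bm2 hs.le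
    have t3 := mul_le_mul_of_nonneg_left bq1 hs.le
    have t4 := mul_le_mul_of_nonneg_left bq2 hs.le
    have h5 := mul_le_mul_of_nonneg_left hmq hs.le
    have h6 : 0 ≤ s * (1 / (q : ℝ)) := by positivity
    rw [abs_le]
    constructor <;> nlinarith
  · rw [← Real.exp_add, add_sub_cancel, Real.exp_add, Real.exp_log hms, Real.exp_log hPpos]

lemma mu1_one (n m : ℕ) (hn : 1 ≤ n) (hm : 2 ≤ m) (y : Fin n → ℝ) :
    mu1 1 n m y = (((m : ℝ) - 1 / n) * (∏ j ∈ range n,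
        Real.Gamma ((m : ℝ) - n + 1 - 1 / n + j) / Real.Gamma ((m : ℝ) - n + 1 + j)))
      * Psi1 y * PsiS 1 y := by
  have hn' : (1 : ℝ) ≤ n := by exact_mod_cast hn
  have hm' : (2 : ℝ) ≤ m := by exact_mod_cast hm
  have hs1 : 1 / (n : ℝ) ≤ 1 := by rw [div_le_one (by linarith)]; exact hn'
  have hms : 0 < (m : ℝ) - 1 / n := by linarith
  have hS : ∑ k ∈ Finset.Nat.antidiagonalTuple n 1,
      ∏ i, Real.Gamma ((m : ℝ) - (1 : ℕ) / n + k i) * y i ^ (k i)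
        / (Real.Gamma ((k i : ℝ) + 1) * Real.Gamma ((m : ℝ) - (1 : ℕ) / n))
      = ∑ i, ((m : ℝ) - 1 / n) * y i := by
    have hset : Finset.Nat.antidiagonalTuple n 1
        = (univ : Finset (Fin n)).image (fun i => Pi.single i 1) := by
      ext k
      rw [Finset.Nat.mem_antidiagonalTuple, mem_image]
      constructor
      · intro h
        have hne : ∃ i, k i ≠ 0 := by
          by_contra hcon
          push Not at hcon
          simp [hcon] at h
        obtain ⟨i, hi⟩ := hne
        refine ⟨i, mem_univ _, ?_⟩
        rw [← add_sum_erase _ _ (mem_univ i)] at h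
        have h0 : ∑ j ∈ univ.erase i, k j = 0 := by omega
        rw [sum_eq_zero_iff] at h0
        funext j
        by_cases hj : j = i
        · subst hj
          rw [Pi.single_eq_same]
          omega
        · rw [Pi.single_eq_of_ne hj]
          exact (h0 j (mem_erase.2 ⟨hj, mem_univ _⟩)).symm
      · rintro ⟨i, _, rfl⟩
        simp
    rw [hset, sum_image (by
      intro i _ j _ hij
      by_contra hne
      have := congrFun hij i
      simp [Pi.single_eq_of_ne hne] at this)]
    refine sum_congr rfl (fun i _ => ?_)
    rw [prod_eq_single i]
    · rw [Pi.single_eq_same]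
      have hG := (Real.Gamma_pos_of_pos hms).ne'
      push_cast
      rw [Real.Gamma_add_one hms.ne', one_add_one_eq_two, Real.Gamma_two]
      generalize (m : ℝ) - 1 / n = z at *
      field_simp
    · intro j _ hj
      rw [Pi.single_eq_of_ne hj]
      have hG := (Real.Gamma_pos_of_pos hms).ne'
      push_cast
      rw [zero_add, Real.Gamma_one, add_zero, pow_zero]
      generalize (m : ℝ) - 1 / n = z at *
      field_simp
    · simp
  unfold mu1
  rw [hS, ← mul_sum]
  unfold Psi1 PsiS
  simp only [Nat.factorial_one, Nat.cast_one, pow_one]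
  ring

lemma Psi1_bound (n : ℕ) (hn : 1 ≤ n) (y : Fin n → ℝ) (N0 : ℝ) (hN0 : 0 < N0)
    (h : ∀ i, N0 ≤ y i) : 0 ≤ Psi1 y ∧ Psi1 y ≤ 1 / N0 := by
  have hn' : (0 : ℝ) < n := by exact_mod_cast hn
  unfold Psi1
  constructor
  · exact prod_nonneg (fun i _ => Real.rpow_nonneg (hN0.le.trans (h i)) _)
  · calc ∏ i, y i ^ (-(1 : ℝ) / n) ≤ ∏ i : Fin n, N0 ^ (-(1 : ℝ) / n) :=
        prod_le_prod (fun i _ => Real.rpow_nonneg (hN0.le.trans (h i)) _)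
          (fun i _ => Real.rpow_le_rpow_of_nonpos hN0 (h i)
            (div_nonpos_of_nonpos_of_nonneg (by norm_num) hn'.le))
      _ = 1 / N0 := by
        rw [prod_const, card_univ, Fintype.card_fin, ← Real.rpow_natCast, ← Real.rpow_mul hN0.le,
          div_mul_cancel₀ _ hn'.ne', Real.rpow_neg_one, one_div]

lemma PsiS_bound (n : ℕ) (hn : 1 ≤ n) (y : Fin n → ℝ) (N0 Y : ℝ) (hN0 : 0 < N0)
    (h : ∀ i, N0 ≤ y i) (hY : ∀ i, y i ≤ Y) : 0 ≤ PsiS 1 y ∧ PsiS 1 y ≤ Y := by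
  have hn' : (0 : ℝ) < n := by exact_mod_cast hn
  unfold PsiS
  simp only [pow_one]
  constructor
  · exact mul_nonneg (by positivity) (sum_nonneg (fun i _ => hN0.le.trans (h i)))
  · have : ∑ i, y i ≤ ∑ i : Fin n, Y := sum_le_sum (fun i _ => hY i)
    rw [sum_const, card_univ, Fintype.card_fin, nsmul_eq_mul] at this
    rw [one_div, inv_mul_le_iff₀ hn']
    exact this

/-- uniform asymptotic approximation of the mean of the GLRT statistic
under `H₁`: `μ1(1,n,m,y) = e (1−c)^{(1−c)/c} Ψ₁(y) Ψ₂(y) + O(1/n²)`, uniformly over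
eigenvalue vectors `y` with entries in `[N0, Y]`, along `n = a·t`, `m = b·t`. -/
theorem mu1_mean_asymptotic (a b : ℕ) (ha : 0 < a) (hab : a < b)
    (N0 Y : ℝ) (hN0 : 0 < N0) (hNY : N0 ≤ Y) :
    ∃ C : ℝ, 0 < C ∧ ∃ T : ℕ, 0 < T ∧ ∀ t : ℕ, T ≤ t →
      ∀ y : Fin (a * t) → ℝ, (∀ i, N0 ≤ y i) → (∀ i, y i ≤ Y) → Monotone y →
        |mu1 1 (a * t) (b * t) y -
            Real.exp 1 * (1 - (a : ℝ) / b) ^ ((1 - (a : ℝ) / b) / ((a : ℝ) / b))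
              * Psi1 y * PsiS 1 y|
          ≤ C / ((a * t : ℕ) : ℝ) ^ 2 := by
  have hb : 0 < b := by omega
  have haR : (0 : ℝ) < a := by exact_mod_cast ha
  have hbR : (0 : ℝ) < b := by exact_mod_cast hb
  have habR : (a : ℝ) < b := by exact_mod_cast hab
  have hYpos : 0 < Y := by linarith
  set D : ℝ := Real.exp 1 * (1 - (a : ℝ) / b) ^ ((1 - (a : ℝ) / b) / ((a : ℝ) / b)) with hD
  have hc : 0 < 1 - (a : ℝ) / b := by
    rw [sub_pos, div_lt_one hbR]
    exact habR
  have hDpos : 0 < D := by positivity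
  refine ⟨D * (2 * (3 * a)) * (1 / N0) * Y, by positivity, 3, by norm_num, ?_⟩
  intro t ht y hy1 hy2 _
  have htR : (3 : ℝ) ≤ t := by exact_mod_cast ht
  obtain ⟨d, hd⟩ : ∃ d, b = d + a := ⟨b - a, by omega⟩
  have hd1 : 1 ≤ d := by omega
  have hn1 : 1 ≤ a * t := Nat.mul_pos ha (by omega)
  have hq1 : 1 ≤ d * t := Nat.mul_pos hd1 (by omega)
  have hbt : b * t = d * t + a * t := by rw [hd]; ring
  obtain ⟨E, hE, hfac⟩ := gamma_factor (d * t) (a * t) hq1 hn1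
  rw [mu1_one (a * t) (b * t) hn1 (by omega) y]
  rw [hbt, hfac]
  have hdR : (1 : ℝ) ≤ d := by exact_mod_cast hd1
  have hbd : (b : ℝ) = d + a := by exact_mod_cast hd
  have hDeq : Real.exp (1 + (((d * t : ℕ) : ℝ) / ((a * t : ℕ) : ℝ))
      * Real.log (((d * t : ℕ) : ℝ) / ((d * t + a * t : ℕ) : ℝ))) = D := by
    rw [hD, Real.exp_add, Real.rpow_def_of_pos hc]
    congr 2
    rw [mul_comm]
    have e1 : ((d * t : ℕ) : ℝ) / ((d * t + a * t : ℕ) : ℝ) = 1 - (a : ℝ) / b := by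
      rw [hbd]
      push_cast
      field_simp
      ring
    have e2 : ((d * t : ℕ) : ℝ) / ((a * t : ℕ) : ℝ) = (1 - (a : ℝ) / b) / ((a : ℝ) / b) := by
      rw [hbd]
      push_cast
      field_simp
      ring
    rw [e1, e2]
  rw [hDeq]
  have hnR : (0 : ℝ) < ((a * t : ℕ) : ℝ) := by exact_mod_cast hn1
  have hE2 : |E| ≤ 3 * a / ((a * t : ℕ) : ℝ) ^ 2 := by
    refine hE.trans ?_
    have h1 : 1 / ((d * t : ℕ) : ℝ) ≤ a * (1 / ((a * t : ℕ) : ℝ)) := by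
      push_cast
      have : (a : ℝ) * (1 / ((a : ℝ) * t)) = 1 / t := by field_simp
      rw [this]
      exact one_div_le_one_div_of_le (by linarith) (by nlinarith)
    have h2 := mul_le_mul_of_nonneg_left h1
      (by positivity : 0 ≤ 3 * (1 / ((a * t : ℕ) : ℝ)))
    refine h2.trans (le_of_eq ?_)
    field_simp
  have hE1 : |E| ≤ 1 := by
    refine hE2.trans ?_
    rw [div_le_one (by positivity)]
    push_cast
    have ha1 : (1 : ℝ) ≤ a := by exact_mod_cast ha
    have h9 : (9 : ℝ) ≤ (t : ℝ) ^ 2 := by nlinarith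
    have ha2 : (a : ℝ) ≤ (a : ℝ) ^ 2 := by nlinarith
    rw [mul_pow]
    nlinarith
  have hexp := (Real.abs_exp_sub_one_le hE1).trans (mul_le_mul_of_nonneg_left hE2 zero_le_two)
  obtain ⟨p0, p1⟩ := Psi1_bound (a * t) hn1 y N0 hN0 hy1
  obtain ⟨s0, s1⟩ := PsiS_bound (a * t) hn1 y N0 Y hN0 hy1 hy2
  have e : D * Real.exp E * Psi1 y * PsiS 1 y - D * Psi1 y * PsiS 1 y
      = D * (Real.exp E - 1) * Psi1 y * PsiS 1 y := by ring
  rw [e, abs_mul, abs_mul, abs_mul, abs_of_pos hDpos, abs_of_nonneg p0, abs_of_nonneg s0]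
  calc D * |Real.exp E - 1| * Psi1 y * PsiS 1 y
      ≤ D * (2 * (3 * a / ((a * t : ℕ) : ℝ) ^ 2)) * (1 / N0) * Y := by gcongr
    _ = D * (2 * (3 * a)) * (1 / N0) * Y / ((a * t : ℕ) : ℝ) ^ 2 := by ring
end
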